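/- Let p ≥ 1, r ≥ 1 and n ≥ 1 be integers. Consider the alphabet consisting of letters a_1, …, a_p and b. For each i let ε_i ∈ {+1, −1} and let W_i be a nonempty reduced word in the letters a_1, …, a_p, and set W = b^{ε_1} W_1 b^{ε_2} W_2 ⋯ b^{ε_r} W_r. Suppose that W_1, …, W_r freely generate a subgroup of the free group on a_1, …, a_p. Then the one-relator group G = ⟨a_1, …, a_p, b ∣ W^n⟩ is coherent. -/

import Mathlib

/-- A word over the alphabet `α` (a list of letters with exponents `±1`) is *reduced*
if it contains no adjacent pair of the form `(s, e) (s, ¬e)`. -/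
def WordReduced {α : Type*} (w : List (α × Bool)) : Prop :=
  List.Chain' (fun p q => ¬(p.1 = q.1 ∧ p.2 = !q.2)) w

/-- A group is *finitely presented* if it is isomorphic to the quotient of a free group
on a finite set of generators by the normal closure of a finite set of relators. -/
def FinitelyPresentedGroup (G : Type*) [Group G] : Prop :=
  ∃ (α : Type) (_ : Fintype α) (rels : Finset (FreeGroup α)),
    Nonempty (PresentedGroup (rels : Set (FreeGroup α)) ≃* G)

/-- A group is *coherent* if every finitely generated subgroup is finitely presented. -/
def CoherentGroup (G : Type*) [Group G] : Prop :=
  ∀ H : Subgroup G, H.FG → FinitelyPresentedGroup H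

/-- Re-express a word over the alphabet `α` as a word over a larger alphabet `β`
via a map `f : α → β` of alphabets. -/
def embedWord {α β : Type*} (f : α → β) (w : List (α × Bool)) : List (β × Bool) :=
  w.map fun p => (f p.1, p.2)

/-- The word `W = b^{ε₁} W₁ b^{ε₂} W₂ ⋯ b^{ε_r} W_r` over the alphabet
`Fin p ⊕ Unit`, where `Sum.inl i` is the generator `aᵢ`, `Sum.inr ()` is `b`,
and the Boolean `ε i` records the sign of the exponent `±1` of the `i`-th
occurrence of `b`. -/
def bWord (p r : ℕ) (ε : Fin r → Bool) (Wi : Fin r → List (Fin p × Bool)) :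
    List ((Fin p ⊕ Unit) × Bool) :=
  ((List.finRange r).map fun i =>
    ((Sum.inr (), ε i) : (Fin p ⊕ Unit) × Bool) :: embedWord Sum.inl (Wi i)).flatten


namespace OneRel
open Function

section Ext
variable {Fl Ed Γ : Type*} [Group Γ]

def theta (ed : Fl → Ed) (sg : Fl → Bool) (μ : Fl → Γ) (l : Ed → Γ) (x : Fl) : Γ :=
  (if sg x = true then l (ed x) else (l (ed x))⁻¹) * μ x

def hol (τ : Fl → Fl) (ed : Fl → Ed) (sg : Fl → Bool) (μ : Fl → Γ) (l : Ed → Γ) (N : ℕ)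
    (x : Fl) : Γ :=
  ((List.range N).map (fun m => theta ed sg μ l (τ^[m] x))).prod

variable {τ : Fl → Fl} {ed : Fl → Ed} {sg : Fl → Bool} {μ : Fl → Γ} {N : ℕ}

theorem iter_back (hτ : ∀ x, τ^[N] x = x) (hN : 0 < N) (x : Fl) (m : ℕ) :
    ∃ j, τ^[j] (τ^[m] x) = x := by
  refine ⟨N * m - m, ?_⟩
  rw [← iterate_add_apply]
  have h : N * m - m + m = N * m := Nat.sub_add_cancel (Nat.le_mul_of_pos_left m hN)
  rw [h, iterate_mul]
  have : τ^[N] = id := funext hτ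
  rw [this, iterate_id]; rfl

theorem iter_mod (hτ : ∀ x, τ^[N] x = x) (x : Fl) (m : ℕ) :
    τ^[m] x = τ^[m % N] x := by
  conv_lhs => rw [← Nat.mod_add_div m N, iterate_add_apply, iterate_mul]
  have : τ^[N] = id := funext hτ
  rw [this, iterate_id]; rfl

theorem hol_shift (hτ : ∀ x, τ^[N] x = x) (l : Ed → Γ) (x : Fl)
    (h : hol τ ed sg μ l N x = 1) : hol τ ed sg μ l N (τ x) = 1 := by
  unfold hol at *
  have e1 : ((List.range (N+1)).map (fun m => theta ed sg μ l (τ^[m] x))).prod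
      = theta ed sg μ l x := by
    rw [List.range_succ, List.map_append, List.prod_append, h]
    simp [hτ]
  rw [List.range_succ_eq_map, List.map_cons, List.prod_cons, List.map_map] at e1
  have e2 := mul_eq_left.mp e1
  exact e2

theorem hol_iter (hτ : ∀ x, τ^[N] x = x) (l : Ed → Γ) (x : Fl)
    (h : hol τ ed sg μ l N x = 1) (m : ℕ) : hol τ ed sg μ l N (τ^[m] x) = 1 := by
  induction m with
  | zero => exact h
  | succ m ih => rw [iterate_succ_apply']; exact hol_shift hτ l _ ih

theorem hol_congr (l l' : Ed → Γ) (x : Fl) (h : ∀ m, l (ed (τ^[m] x)) = l' (ed (τ^[m] x))) :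
    hol τ ed sg μ l N x = hol τ ed sg μ l' N x := by
  unfold hol theta
  simp only [h]

def FlatOn (τ : Fl → Fl) (ed : Fl → Ed) (sg : Fl → Bool) (μ : Fl → Γ) (N : ℕ) (l : Ed → Γ)
    (E : Set Ed) : Prop :=
  ∀ x, (∀ m, ed (τ^[m] x) ∈ E) → hol τ ed sg μ l N x = 1

open Classical in
theorem ext_lemma (hτ : ∀ x, τ^[N] x = x) (hN : 0 < N) (E E' : Set Ed) (Sol : Set Fl) (ρ : Ed → ℕ)
    (h1 : ∀ x, (∀ m, ed (τ^[m] x) ∈ E') → (∃ m, ed (τ^[m] x) ∉ E) → ∃ m, τ^[m] x ∈ Sol)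
    (h2 : ∀ z ∈ Sol, ed z ∉ E)
    (h3 : ∀ z ∈ Sol, ∀ z' ∈ Sol, ed z = ed z' → z = z')
    (h4 : ∀ z ∈ Sol, ∀ m, 0 < m → m < N → ρ (ed (τ^[m] z)) < ρ (ed z))
    (l : Ed → Γ) (hl : FlatOn τ ed sg μ N l E) :
    ∃ l' : Ed → Γ, (∀ e ∈ E, l' e = l e) ∧ FlatOn τ ed sg μ N l' E' := by
  let rest : (Ed → Γ) → Fl → Γ := fun f z =>
    ((List.range (N-1)).map (fun m => theta ed sg μ f (τ^[m+1] z))).prod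
  let val : (Ed → Γ) → Fl → Γ := fun f z =>
    if sg z = true then (μ z * rest f z)⁻¹ else (μ z * rest f z)
  let F : (e : Ed) → ((e' : Ed) → ρ e' < ρ e → Γ) → Γ := fun e rec =>
    if e ∈ E then l e else
      if h : ∃ z ∈ Sol, ed z = e then
        val (fun e' => if h' : ρ e' < ρ e then rec e' h' else 1) h.choose
      else 1
  let l' : Ed → Γ := (InvImage.wf ρ Nat.lt_wfRel.wf).fix F
  have hfix : ∀ e, l' e = F e (fun e' _ => l' e') := fun e => WellFounded.fix_eq _ F e
  have hE : ∀ e ∈ E, l' e = l e := by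
    intro e he
    rw [hfix]; simp only [F, if_pos he]
  have hS : ∀ z ∈ Sol, l' (ed z) = val l' z := by
    intro z hz
    have hex : ∃ z' ∈ Sol, ed z' = ed z := ⟨z, hz, rfl⟩
    have hch : hex.choose = z := h3 _ hex.choose_spec.1 _ hz hex.choose_spec.2
    rw [hfix]; simp only [F, if_neg (h2 z hz), dif_pos hex, hch]
    simp only [val]
    have : rest (fun e' => if h' : ρ e' < ρ (ed z) then l' e' else 1) z = rest l' z := by
      simp only [rest]
      congr 1
      apply List.map_congr_left
      intro m hm
      rw [List.mem_range] at hm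
      unfold theta
      simp only [dif_pos (h4 z hz (m+1) (by omega) (by omega))]
    rw [this]
  have hSflat : ∀ z ∈ Sol, hol τ ed sg μ l' N z = 1 := by
    intro z hz
    have e0 : hol τ ed sg μ l' N z = theta ed sg μ l' z * rest l' z := by
      unfold hol
      obtain ⟨k, rfl⟩ : ∃ k, N = k + 1 := ⟨N - 1, by omega⟩
      rw [List.range_succ_eq_map, List.map_cons, List.prod_cons, List.map_map]
      rfl
    rw [e0, theta, hS z hz]
    simp only [val]
    split_ifs <;> group
  refine ⟨l', hE, ?_⟩
  intro x hx
  by_cases hb : ∃ m, ed (τ^[m] x) ∉ E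
  · obtain ⟨m, hm⟩ := h1 x hx hb
    obtain ⟨j, hj⟩ := iter_back hτ hN x m
    rw [← hj]
    exact hol_iter hτ l' _ (hSflat _ hm) j
  · push Not at hb
    rw [hol_congr l' l x (fun m => hE _ (hb m))]
    exact hl x hb

end Ext

section Perim
variable {X : Type*} {r : ℕ}

def tau (C : ZMod r → X → X) (x : X × ZMod r) : X × ZMod r := (C x.2 x.1, x.2 + 1)

theorem tau_snd (C : ZMod r → X → X) (x : X × ZMod r) (m : ℕ) :
    ((tau C)^[m] x).2 = x.2 + m := by
  induction m with
  | zero => simp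
  | succ m ih => rw [iterate_succ_apply']; simp [tau, ih, add_assoc]

def bad (C : ZMod r → X → X) (B : Set X) : Set (X × ZMod r) :=
  {x | x.1 ∈ B ∧ ∃ m, ((tau C)^[m] x).1 ∉ B}

theorem bad_finite [NeZero r] (C : ZMod r → X → X) {B : Set X} (hB : B.Finite) :
    (bad C B).Finite :=
  (hB.prod (Set.finite_univ (α := ZMod r))).subset (fun _ hx => ⟨hx.1, Set.mem_univ _⟩)

theorem peel [NeZero r] (C : ZMod r → X → X) {N : ℕ} (hτ : ∀ x, (tau C)^[N] x = x) (hN : r ≤ N)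
    {B : Set X} (hB : B.Finite) (x : X × ZMod r) (hx : x.1 ∉ B)
    (hx' : ∀ m, 0 < m → m < N → ((tau C)^[m] x).1 ∈ B) :
    (bad C (insert x.1 B)).ncard ≤ (bad C B).ncard ∧
    ∀ z : X × ZMod r, z.1 = x.1 → z ≠ x → (∀ m, ((tau C)^[m] z).1 ∈ insert x.1 B) →
      (bad C (insert x.1 B)).ncard < (bad C B).ncard := by
  have hr : 0 < r := Nat.pos_of_neZero r
  have hN0 : 0 < N := by omega
  have hin : ∀ m, ((tau C)^[m] x).1 ∈ insert x.1 B := by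
    intro m
    rw [iter_mod hτ]
    have := Nat.mod_lt m hN0
    rcases Nat.eq_zero_or_pos (m % N) with h | h
    · rw [h]; exact Set.mem_insert _ _
    · exact Set.mem_insert_of_mem _ (hx' _ h this)
  let P : Set (X × ZMod r) := (fun m => (tau C)^[m] x) '' (Set.Ioo 0 r)
  have hPc : P.ncard = r - 1 := by
    rw [Set.InjOn.ncard_image]
    · rw [← Nat.card_coe_set_eq]; simp
    · intro a ha b hb hab
      have := congrArg Prod.snd hab
      simp only [tau_snd, add_right_inj] at this
      rw [ZMod.natCast_eq_natCast_iff'] at this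
      rwa [Nat.mod_eq_of_lt ha.2, Nat.mod_eq_of_lt hb.2] at this
  have hPb : P ⊆ bad C B := by
    rintro _ ⟨m, hm, rfl⟩
    refine ⟨hx' m hm.1 (by have := hm.2; omega), ?_⟩
    obtain ⟨j, hj⟩ := iter_back hτ hN0 x m
    exact ⟨j, by simp only [hj]; exact hx⟩
  have hbf := bad_finite C hB
  let Fx : Set (X × ZMod r) := (fun j => (x.1, j)) '' {j | j ≠ x.2}
  have hFc : Fx.ncard = r - 1 := by
    rw [Set.ncard_image_of_injective _ (fun a b h => congrArg Prod.snd h)]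
    have : {j : ZMod r | j ≠ x.2} = {x.2}ᶜ := rfl
    rw [this, Set.ncard_compl]
    simp
  have hFf : Fx.Finite := Set.toFinite _
  have key : ∀ y ∈ bad C (insert x.1 B), y ∈ bad C B \ P ∨ y ∈ Fx := by
    rintro y ⟨hy1, m, hm⟩
    rcases hy1 with hy | hy
    · right
      refine ⟨y.2, ?_, by rw [← hy]⟩
      intro h2
      have : y = x := Prod.ext hy h2
      rw [this] at hm
      exact hm (hin m)
    · left
      refine ⟨⟨hy, m, fun h => hm (Set.mem_insert_of_mem _ h)⟩, ?_⟩
      rintro ⟨k, _, rfl⟩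
      simp only [← iterate_add_apply] at hm
      exact hm (hin _)
  have hdiff : (bad C B \ P).ncard + (r - 1) = (bad C B).ncard := by
    rw [← hPc]; exact Set.ncard_sdiff_add_ncard_of_subset hPb hbf
  constructor
  · calc _ ≤ ((bad C B \ P) ∪ Fx).ncard :=
          Set.ncard_le_ncard (fun y hy => key y hy) (hbf.sdiff.union hFf)
      _ ≤ (bad C B \ P).ncard + Fx.ncard := Set.ncard_union_le _ _
      _ = _ := by rw [hFc, hdiff]
  · intro z hz hzx hzB
    have hzF : z ∈ Fx := ⟨z.2, fun h => hzx (Prod.ext hz h), by rw [← hz]⟩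
    have hFz : (Fx \ {z}).ncard + 1 = r - 1 := by
      rw [← hFc]; exact Set.ncard_sdiff_singleton_add_one hzF hFf
    have hz' : z ∉ bad C (insert x.1 B) := fun h => by
      obtain ⟨_, m, hm⟩ := h
      exact hm (hzB m)
    have : (bad C (insert x.1 B)).ncard ≤ (bad C B \ P).ncard + (Fx \ {z}).ncard := by
      calc _ ≤ ((bad C B \ P) ∪ (Fx \ {z})).ncard := by
            refine Set.ncard_le_ncard (fun y hy => ?_) (hbf.sdiff.union hFf.sdiff)
            rcases key y hy with h | h
            · exact Or.inl h
            · exact Or.inr ⟨h, fun h' => hz' (by rw [← (h' : y = z)]; exact hy)⟩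
        _ ≤ _ := Set.ncard_union_le _ _
    omega

end Perim

section Forest
variable {Gd Γ : Type*} [Group Γ] {r : ℕ}

/-- The tree property of the flag structure. -/
structure TreeProp (C : ZMod r → Gd → Gd) (N : ℕ) (d : Gd → ℕ) (par : Gd × ZMod r → Prop) :
    Prop where
  t1 : ∀ x, ∃ m, par ((tau C)^[m] x)
  t2 : ∀ x, par x → ∀ m, 0 < m → m < N → d ((tau C)^[m] x).1 = d x.1 + 1
  t3 : ∀ x y : Gd × ZMod r, x.1 = y.1 → ¬ par x → ¬ par y → x = y

open Classical in
theorem forest_ext {C : ZMod r → Gd → Gd} {N : ℕ} {d : Gd → ℕ} {par : Gd × ZMod r → Prop}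
    (T : TreeProp C N d par)
    (hτ : ∀ x, (tau C)^[N] x = x) (hN : 0 < N) (sg : Gd × ZMod r → Bool) (μ : Gd × ZMod r → Γ)
    (E : Set Gd) (hE : ∀ x : Gd × ZMod r, x.1 ∉ E → ∃ m, 0 < m ∧ m < N ∧ ((tau C)^[m] x).1 ∉ E)
    (l : Gd → Γ) (hl : FlatOn (tau C) Prod.fst sg μ N l E) :
    ∃ l' : Gd → Γ, (∀ e ∈ E, l' e = l e) ∧ FlatOn (tau C) Prod.fst sg μ N l' Set.univ := by
  have hnp : ∀ y, par y → ∀ k, 0 < k → k < N → ¬ par ((tau C)^[k] y) := by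
    intro y hy k hk hkN hp
    have a := T.t2 y hy k hk hkN
    have b := T.t2 _ hp (N - k) (by omega) (by omega)
    rw [← iterate_add_apply, Nat.sub_add_cancel hkN.le, hτ] at b
    omega
  have hinj : ∀ y, par y → ∀ a b, a < b → b < N → (tau C)^[a] y ≠ (tau C)^[b] y := by
    intro y hy a b hab hb h
    have h2 := congrArg ((tau C)^[N - a]) h
    rw [← iterate_add_apply, ← iterate_add_apply, Nat.sub_add_cancel (by omega), hτ,
      show N - a + b = (b - a) + N by omega, iterate_add_apply, hτ] at h2
    have := T.t2 y hy (b - a) (by omega) (by omega)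
    rw [← h2] at this
    omega
  have hk : ∀ y, (∃ m, ((tau C)^[m] y).1 ∉ E) → ∃ k, 0 < k ∧ k < N ∧ ((tau C)^[k] y).1 ∉ E := by
    rintro y ⟨m, hm⟩
    rw [iter_mod hτ] at hm
    rcases Nat.eq_zero_or_pos (m % N) with h | h
    · rw [h] at hm; exact hE y hm
    · exact ⟨_, h, Nat.mod_lt _ hN, hm⟩
  choose! k hk0 hkN hkE using hk
  let Sol : Set (Gd × ZMod r) :=
    {z | ∃ y, par y ∧ (∃ m, ((tau C)^[m] y).1 ∉ E) ∧ z = (tau C)^[k y] y}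
  have hSnp : ∀ z ∈ Sol, ¬ par z := by
    rintro z ⟨y, hy, hm, rfl⟩
    exact hnp y hy _ (hk0 y hm) (hkN y hm)
  obtain ⟨ind, hind1, hind0, hindle⟩ : ∃ ind : Gd → ℕ, (∀ e, (∃ z ∈ Sol, z.1 = e) → ind e = 1) ∧
      (∀ e, ¬ (∃ z ∈ Sol, z.1 = e) → ind e = 0) ∧ ∀ e, ind e ≤ 1 := by
    refine ⟨fun e => if ∃ z ∈ Sol, z.1 = e then 1 else 0, fun e h => if_pos h,
      fun e h => if_neg h, fun e => ?_⟩
    dsimp only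
    split_ifs <;> omega
  refine ext_lemma hτ hN E Set.univ Sol (fun e => 2 * d e + ind e)
    ?_ ?_ ?_ ?_ l hl
  · rintro x - ⟨m', hm'⟩
    obtain ⟨m, hm⟩ := T.t1 x
    obtain ⟨j, hj⟩ := iter_back hτ hN x m
    refine ⟨k ((tau C)^[m] x) + m, (tau C)^[m] x, hm, ⟨m' + j, ?_⟩, iterate_add_apply _ _ _ _⟩
    rw [iterate_add_apply, hj]; exact hm'
  · rintro z ⟨y, hy, hm, rfl⟩
    exact hkE y hm
  · intro z hz z' hz' h
    exact T.t3 z z' h (hSnp z hz) (hSnp z' hz')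
  · intro z hz m hm0 hmN
    have hz0 := hz
    obtain ⟨y, hy, hm, rfl⟩ := hz
    have hky0 := hk0 y hm
    have hkyN := hkN y hm
    have dz := T.t2 y hy _ hky0 hkyN
    have hpos : ind ((tau C)^[k y] y).1 = 1 := hind1 _ ⟨_, hz0, rfl⟩
    have hmm : (tau C)^[m] ((tau C)^[k y] y) = (tau C)^[(m + k y) % N] y := by
      rw [← iterate_add_apply, iter_mod hτ]
    simp only [hmm, hpos]
    rcases Nat.eq_zero_or_pos ((m + k y) % N) with h | h
    · rw [h, dz]
      have hle := hindle y.1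
      simp only [iterate_zero, id]
      omega
    · have hlt := Nat.mod_lt (m + k y) hN
      have d2 := T.t2 y hy _ h hlt
      rw [hind0, dz, d2]
      · omega
      · rintro ⟨z2, hz2, he⟩
        have h3 := T.t3 _ _ he (hSnp z2 hz2) (hnp y hy _ h hlt)
        obtain ⟨y2, hy2, hm2, rfl⟩ := hz2
        obtain ⟨j, hj⟩ := iter_back hτ hN y2 (k y2)
        rw [h3, ← iterate_add_apply, iter_mod hτ] at hj
        have hyy : y2 = y := by
          rcases Nat.eq_zero_or_pos ((j + (m + k y) % N) % N) with h0 | h0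
          · rw [h0] at hj; exact hj.symm
          · exact absurd (hj ▸ hy2) (hnp y hy _ h0 (Nat.mod_lt _ hN))
        rw [hyy] at h3
        have hne : k y ≠ (m + k y) % N := by
          intro h4
          rcases lt_or_ge (m + k y) N with h5 | h5
          · rw [Nat.mod_eq_of_lt h5] at h4; omega
          · rw [Nat.mod_eq_sub_mod h5, Nat.mod_eq_of_lt (by omega)] at h4; omega
        rcases lt_or_gt_of_ne hne with h6 | h6
        · exact hinj y hy _ _ h6 hlt h3
        · exact hinj y hy _ _ h6 hkyN h3.symm

end Forest

section Big
variable {Gd X Γ : Type*} [Group Γ] {r : ℕ}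

theorem tau_map {C : ZMod r → Gd → Gd} {D : ZMod r → X → X} {q : Gd → X}
    (hq : ∀ i e, q (C i e) = D i (q e)) (x : Gd × ZMod r) (m : ℕ) :
    (tau D)^[m] (q x.1, x.2) = (q ((tau C)^[m] x).1, ((tau C)^[m] x).2) := by
  induction m with
  | zero => rfl
  | succ m ih => rw [iterate_succ_apply', iterate_succ_apply', ih]; simp [tau, hq]

theorem tau_map_fst {C : ZMod r → Gd → Gd} {D : ZMod r → X → X} {q : Gd → X}
    (hq : ∀ i e, q (C i e) = D i (q e)) (x : Gd × ZMod r) (m : ℕ) :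
    q ((tau C)^[m] x).1 = ((tau D)^[m] (q x.1, x.2)).1 := by
  rw [tau_map hq]

open Classical in
theorem big_ext [NeZero r] {C : ZMod r → Gd → Gd} {D : ZMod r → X → X} {q : Gd → X}
    (hqs : Surjective q)
    (hq : ∀ i e, q (C i e) = D i (q e)) {N : ℕ} {d : Gd → ℕ} {par : Gd × ZMod r → Prop}
    (T : TreeProp C N d par)
    (hτ : ∀ x, (tau C)^[N] x = x) (hN : r ≤ N)
    (sg : Gd × ZMod r → Bool) (μ : Gd × ZMod r → Γ)
    (Y : Set X) (hY : Y.Finite)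
    (hmin : ∀ B : Set X, B.Finite → Y ⊆ B → (bad D Y).ncard ≤ (bad D B).ncard)
    (l : Gd → Γ) (hl : FlatOn (tau C) Prod.fst sg μ N l (q ⁻¹' Y)) :
    ∃ l' : Gd → Γ, (∀ e, q e ∈ Y → l' e = l e) ∧
      FlatOn (tau C) Prod.fst sg μ N l' Set.univ := by
  have hN0 : 0 < N := lt_of_lt_of_le (Nat.pos_of_neZero r) hN
  have hτD : ∀ x, (tau D)^[N] x = x := by
    rintro ⟨x, i⟩
    obtain ⟨e, rfl⟩ := hqs x
    have := tau_map hq (e, i) N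
    simp only [hτ] at this
    exact this
  let cond : Set X → (Gd → Γ) → Prop := fun E f =>
    Y ⊆ E ∧ (∀ A : Set X, A.Finite → A ⊆ E → ∃ B : Set X, B.Finite ∧ A ⊆ B ∧ Y ⊆ B ∧ B ⊆ E ∧
      (bad D B).ncard ≤ (bad D Y).ncard) ∧ (∀ e, q e ∈ Y → f e = l e) ∧
      FlatOn (tau C) Prod.fst sg μ N f (q ⁻¹' E)
  let α := {p : Set X × (Gd → Γ) // cond p.1 p.2}
  let R : α → α → Prop := fun p p' => p.1.1 ⊆ p'.1.1 ∧ ∀ e, q e ∈ p.1.1 → p'.1.2 e = p.1.2 e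
  have hRrefl : ∀ p, R p p := fun p => ⟨subset_rfl, fun _ _ => rfl⟩
  have hchain : ∀ c : Set α, IsChain R c → ∃ ub, ∀ a ∈ c, R a ub := by
    intro c hc
    have htot : ∀ a ∈ c, ∀ b ∈ c, R a b ∨ R b a := by
      intro a ha b hb
      by_cases hab : a = b
      · subst hab; exact Or.inl (hRrefl a)
      · exact hc ha hb hab
    rcases c.eq_empty_or_nonempty with rfl | ⟨p0, hp0⟩
    · refine ⟨⟨(Y, l), subset_rfl, ?_, fun _ _ => rfl, hl⟩, by simp⟩
      intro A _ hAY
      exact ⟨Y, hY, hAY, subset_rfl, subset_rfl, le_rfl⟩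
    · let U : Set X := {x | ∃ p ∈ c, x ∈ p.1.1}
      have hfin : ∀ A : Set X, A.Finite → A ⊆ U → ∃ p ∈ c, A ⊆ p.1.1 := by
        intro A hA
        induction A, hA using Set.Finite.induction_on with
        | empty => intro _; exact ⟨p0, hp0, Set.empty_subset _⟩
        | @insert a A _ _ ih =>
          intro hAU
          obtain ⟨p, hp, hAp⟩ := ih ((Set.subset_insert _ _).trans hAU)
          obtain ⟨p', hp', hap⟩ := hAU (Set.mem_insert a A)
          rcases htot p hp p' hp' with h | h
          · exact ⟨p', hp', Set.insert_subset hap (hAp.trans h.1)⟩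
          · exact ⟨p, hp, Set.insert_subset (h.1 hap) hAp⟩
      let f : Gd → Γ := fun e => if h : ∃ p ∈ c, q e ∈ p.1.1 then h.choose.1.2 e else 1
      have hf : ∀ p ∈ c, ∀ e, q e ∈ p.1.1 → f e = p.1.2 e := by
        intro p hp e he
        have hex : ∃ p ∈ c, q e ∈ p.1.1 := ⟨p, hp, he⟩
        simp only [f, dif_pos hex]
        rcases htot p hp _ hex.choose_spec.1 with h | h
        · exact h.2 e he
        · exact (h.2 e hex.choose_spec.2).symm
      refine ⟨⟨(U, f), ?_, ?_, ?_, ?_⟩, ?_⟩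
      · intro x hx; exact ⟨p0, hp0, p0.2.1 hx⟩
      · intro A hA hAU
        obtain ⟨p, hp, hAp⟩ := hfin A hA hAU
        obtain ⟨B, h1, h2, h3, h4, h5⟩ := p.2.2.1 A hA hAp
        exact ⟨B, h1, h2, h3, fun x hx => ⟨p, hp, h4 hx⟩, h5⟩
      · intro e he
        show f e = l e
        rw [hf p0 hp0 e (p0.2.1 he)]
        exact p0.2.2.2.1 e he
      · intro x hx
        obtain ⟨p, hp, hAp⟩ := hfin ((fun m => q ((tau C)^[m] x).1) '' Set.Iio N)
          ((Set.finite_Iio N).image _) (by rintro _ ⟨m, _, rfl⟩; exact hx m)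
        have hall : ∀ m, q ((tau C)^[m] x).1 ∈ p.1.1 := by
          intro m
          rw [iter_mod hτ]
          exact hAp ⟨m % N, Nat.mod_lt _ hN0, rfl⟩
        rw [hol_congr f p.1.2 x (fun m => hf p hp _ (hall m))]
        exact p.2.2.2.2 x hall
      · intro p hp
        exact ⟨fun x hx => ⟨p, hp, hx⟩, fun e he => hf p hp e he⟩
  obtain ⟨M, hM⟩ := exists_maximal_of_chains_bounded hchain
    (fun {a b c} h1 h2 => ⟨h1.1.trans h2.1, fun e he => by rw [h2.2 e (h1.1 he), h1.2 e he]⟩)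
  obtain ⟨⟨E, f⟩, hYE, hst, hfl, hflat⟩ := M
  simp only at hYE hst hfl hflat
  have hgood : ∀ x : Gd × ZMod r, x.1 ∉ q ⁻¹' E →
      ∃ m, 0 < m ∧ m < N ∧ ((tau C)^[m] x).1 ∉ q ⁻¹' E := by
    intro x hx
    by_contra hcon
    push Not at hcon
    set y : X × ZMod r := (q x.1, x.2) with hy
    have hyE : y.1 ∉ E := hx
    have hyE' : ∀ m, 0 < m → m < N → ((tau D)^[m] y).1 ∈ E := by
      intro m h0 h1
      rw [← tau_map_fst hq]; exact hcon m h0 h1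
    -- control of finite pieces
    have hctl : ∀ A : Set X, A.Finite → A ⊆ insert y.1 E → ∃ B : Set X, B.Finite ∧ A ⊆ insert y.1 B ∧
        Y ⊆ B ∧ B ⊆ E ∧ (bad D B).ncard ≤ (bad D Y).ncard ∧
        (∀ m, 0 < m → m < N → ((tau D)^[m] y).1 ∈ B) := by
      intro A hA hAE
      obtain ⟨B, h1, h2, h3, h4, h5⟩ := hst ((A \ {y.1}) ∪ ((fun m => ((tau D)^[m] y).1) '' Set.Ioo 0 N))
        (hA.sdiff.union ((Set.finite_Ioo 0 N).image _)) (by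
          rintro a (⟨ha, ha'⟩ | ⟨m, hm, rfl⟩)
          · exact (hAE ha).resolve_left ha'
          · exact hyE' m hm.1 hm.2)
      refine ⟨B, h1, ?_, h3, h4, h5, fun m h0 h1 => h2 (Or.inr ⟨m, ⟨h0, h1⟩, rfl⟩)⟩
      intro a ha
      by_cases h : a = y.1
      · exact Or.inl h
      · exact Or.inr (h2 (Or.inl ⟨ha, h⟩))
    have huniq : ∀ z : X × ZMod r, z.1 = y.1 → (∀ m, ((tau D)^[m] z).1 ∈ insert y.1 E) → z = y := by
      intro z hz hzE
      by_contra hne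
      obtain ⟨B, h1, h2, h3, h4, h5, h6⟩ := hctl ((fun m => ((tau D)^[m] z).1) '' Set.Iio N)
        ((Set.finite_Iio N).image _) (by rintro _ ⟨m, _, rfl⟩; exact hzE m)
      have := (peel D hτD hN h1 y (fun h => hyE (h4 h)) h6).2 z hz hne (by
        intro m
        rw [iter_mod hτD]
        exact h2 ⟨m % N, Nat.mod_lt _ hN0, rfl⟩)
      have h7 := hmin (insert y.1 B) (h1.insert _) (h3.trans (Set.subset_insert _ _))
      omega
    obtain ⟨f', hf', hflat'⟩ := ext_lemma (l := f) (sg := sg) (μ := μ) hτ hN0 (q ⁻¹' E)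
      (q ⁻¹' (insert y.1 E))
      {z | q z.1 = y.1 ∧ z.2 = x.2} (fun e => if q e = y.1 then 1 else 0)
      (by
        rintro z hz ⟨m, hm⟩
        refine ⟨m, ?_⟩
        have hzm : q ((tau C)^[m] z).1 = y.1 := (hz m).resolve_right hm
        refine ⟨hzm, ?_⟩
        have := huniq (q ((tau C)^[m] z).1, ((tau C)^[m] z).2) hzm (by
          intro j
          rw [← tau_map_fst hq, ← iterate_add_apply]
          exact hz _)
        exact (Prod.ext_iff.mp this).2)
      (by
        rintro z ⟨hz, _⟩ h
        exact hyE (by rw [← hz]; exact h))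
      (by
        rintro z ⟨_, h1⟩ z' ⟨_, h2⟩ h
        exact Prod.ext h (h1.trans h2.symm))
      (by
        rintro z ⟨h1, h2⟩ m h0 hm
        have e1 : (q z.1, z.2) = y := Prod.ext h1 h2
        have e2 : q ((tau C)^[m] z).1 ∈ E := by
          rw [tau_map_fst hq, e1]; exact hyE' m h0 hm
        rw [if_pos h1, if_neg]
        · exact Nat.one_pos
        · intro h; exact hyE (by rw [← h]; exact e2))
      hflat
    have hcond : cond (insert y.1 E) f' := by
      refine ⟨hYE.trans (Set.subset_insert _ _), ?_, ?_, hflat'⟩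
      · intro A hA hAE
        obtain ⟨B, h1, h2, h3, h4, h5, h6⟩ := hctl A hA hAE
        refine ⟨insert y.1 B, h1.insert _, h2, h3.trans (Set.subset_insert _ _),
          Set.insert_subset_insert h4, ?_⟩
        exact (peel D hτD hN h1 y (fun h => hyE (h4 h)) h6).1.trans h5
      · intro e he
        rw [hf' e (hYE he)]; exact hfl e he
    have := (hM ⟨(insert y.1 E, f'), hcond⟩ ⟨Set.subset_insert _ _, fun e he => hf' e he⟩).1
    exact hyE (this (Set.mem_insert _ _))
  obtain ⟨l', h1, h2⟩ := forest_ext T hτ hN0 sg μ (q ⁻¹' E) hgood f hflat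
  exact ⟨l', fun e he => by rw [h1 e (hYE he), hfl e he], h2⟩

end Big

section FP

theorem free_letters {X : Type*} [DecidableEq X] (w : FreeGroup X) : ∃ Z : Set X, Z.Finite ∧ ∀ x, x ∉ Z →
    FreeGroup.lift (fun y => if y = x then Multiplicative.ofAdd (1 : ℤ) else 1) w = 1 := by
  induction w using FreeGroup.induction_on with
  | C1 => exact ⟨∅, Set.finite_empty, fun x _ => map_one _⟩
  | of y =>
    refine ⟨{y}, Set.finite_singleton y, fun x hx => ?_⟩
    rw [FreeGroup.lift_apply_of, if_neg (fun h => hx h.symm)]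
  | inv_of y ih =>
    obtain ⟨Z, h1, h2⟩ := ih
    exact ⟨Z, h1, fun x hx => by rw [map_inv, h2 x hx, inv_one]⟩
  | mul a b iha ihb =>
    obtain ⟨Z, h1, h2⟩ := iha
    obtain ⟨Z', h1', h2'⟩ := ihb
    refine ⟨Z ∪ Z', h1.union h1', fun x hx => ?_⟩
    rw [map_mul, h2 x (fun h => hx (Or.inl h)), h2' x (fun h => hx (Or.inr h)), one_mul]

theorem fp_free {X : Type} {L : Type*} [Group L] (hL : Group.FG L) (f : FreeGroup X →* L)
    (hf : Surjective f) (S : Set (FreeGroup X)) (hS : S.Finite)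
    (hker : f.ker = Subgroup.normalClosure S) : FinitelyPresentedGroup L := by
  classical
  obtain ⟨T0, hT0, hT0f⟩ := Group.fg_iff.mp hL
  choose g hg using hf
  choose Z hZ1 hZ2 using fun w : FreeGroup X => free_letters w
  let A : Set X := ⋃ w ∈ S ∪ g '' T0, Z w
  have hA : A.Finite := (hS.union (hT0f.image g)).biUnion (fun w _ => hZ1 w)
  have hall : ∀ x : X, x ∈ A := by
    intro x
    by_contra hx
    let χ : FreeGroup X →* Multiplicative ℤ :=
      FreeGroup.lift (fun y => if y = x then Multiplicative.ofAdd (1 : ℤ) else 1)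
    have hk : ∀ w ∈ S ∪ g '' T0, χ w = 1 := fun w hw =>
      hZ2 w x (fun h => hx (Set.mem_biUnion hw h))
    have h1 : f.ker ≤ χ.ker := by
      rw [hker]
      exact Subgroup.normalClosure_le_normal (fun w hw => hk w (Or.inl hw))
    have h2 : Subgroup.closure T0 ≤ (χ.ker).map f := by
      rw [Subgroup.closure_le]
      intro t ht
      exact ⟨g t, hk _ (Or.inr ⟨t, ht, rfl⟩), hg t⟩
    have h3 : f (FreeGroup.of x) ∈ (χ.ker).map f := h2 (by rw [hT0]; trivial)
    obtain ⟨w, hw, hwf⟩ := h3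
    have h4 : χ (FreeGroup.of x * w⁻¹) = 1 :=
      h1 (by rw [MonoidHom.mem_ker, map_mul, map_inv, hwf, mul_inv_cancel])
    have h5 : χ (FreeGroup.of x) = 1 := by
      rw [map_mul, map_inv, (hw : χ w = 1), inv_one, mul_one] at h4
      exact h4
    simp only [χ, FreeGroup.lift_apply_of, if_true] at h5
    have : (1 : ℤ) = 0 := h5
    omega
  have hfin : Finite X := Set.finite_univ_iff.mp (hA.subset (fun x _ => hall x))
  refine ⟨X, Fintype.ofFinite X, hS.toFinset, ⟨?_⟩⟩
  have hke : Subgroup.normalClosure (hS.toFinset : Set (FreeGroup X)) = f.ker := by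
    rw [hker, Set.Finite.coe_toFinset]
  exact (QuotientGroup.quotientMulEquivOfEq hke).trans
    (QuotientGroup.quotientKerEquivOfSurjective f (fun x => ⟨g x, hg x⟩))

theorem fp_lemma {Λ : Type} [Group Λ] [IsFreeGroup Λ] {L : Type*} [Group L] (hL : Group.FG L)
    (f : Λ →* L) (hf : Surjective f) (S : Set Λ) (hS : S.Finite)
    (hker : f.ker = Subgroup.normalClosure S) : FinitelyPresentedGroup L := by
  let e : FreeGroup (IsFreeGroup.Generators Λ) ≃* Λ := (IsFreeGroup.toFreeGroup Λ).symm
  refine fp_free hL (f.comp e.toMonoidHom) (hf.comp e.surjective) (e ⁻¹' S)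
    (hS.preimage e.injective.injOn) ?_
  have h1 : (f.comp e.toMonoidHom).ker = f.ker.comap e.toMonoidHom := rfl
  rw [h1, hker]
  have h2 : e.symm.toMonoidHom '' S = e ⁻¹' S := by
    ext x
    constructor
    · rintro ⟨s, hs, rfl⟩
      show e (e.symm s) ∈ S
      rwa [e.apply_symm_apply]
    · intro hx
      exact ⟨e x, hx, e.symm_apply_apply x⟩
  rw [← h2, ← Subgroup.map_normalClosure S e.symm.toMonoidHom e.symm.surjective]
  exact Subgroup.comap_equiv_eq_map_symm e _

end FP

section Adv
variable {r N : ℕ} (ψ : ZMod N →+* ZMod r)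

/-- Validity of a stack of letters. -/
def Valid : List (ZMod r × ZMod N) → Prop
  | [] => True
  | a :: t => a.2 ≠ 0 ∧ (∀ c ∈ t.head?, c.1 + ψ c.2 ≠ a.1) ∧ Valid t

open Classical in
noncomputable def push (i : ZMod r) (m : ZMod N) (t : List (ZMod r × ZMod N)) :
    List (ZMod r × ZMod N) := if m = 0 then t else (i, m) :: t

open Classical in
noncomputable def adv (i : ZMod r) (m : ZMod N) : List (ZMod r × ZMod N) → List (ZMod r × ZMod N)
  | [] => push i m []
  | a :: t => if a.1 + ψ a.2 = i then push a.1 (a.2 + m) t else push i m (a :: t)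

/-- The stack does not exit through `i`. -/
def NotExit (i : ZMod r) (s : List (ZMod r × ZMod N)) : Prop := ∀ c ∈ s.head?, c.1 + ψ c.2 ≠ i

theorem adv_notExit {i : ZMod r} {s : List (ZMod r × ZMod N)} (h : NotExit ψ i s) (m : ZMod N) :
    adv ψ i m s = push i m s := by
  cases s with
  | nil => rfl
  | cons a t =>
    have := h a (by simp)
    simp [adv, this]

theorem adv_exit {i0 : ZMod r} (m0 m : ZMod N) (t : List (ZMod r × ZMod N)) :
    adv ψ (i0 + ψ m0) m ((i0, m0) :: t) = push i0 (m0 + m) t := by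
  simp [adv]

theorem valid_push {i : ZMod r} {s : List (ZMod r × ZMod N)} (h : NotExit ψ i s)
    (hs : Valid ψ s) (m : ZMod N) : Valid ψ (push i m s) := by
  unfold push
  split_ifs with hm
  · exact hs
  · exact ⟨hm, h, hs⟩

theorem adv_push {i : ZMod r} {s : List (ZMod r × ZMod N)} (h : NotExit ψ i s)
    (m m' : ZMod N) : adv ψ (i + ψ m) m' (push i m s) = push i (m + m') s := by
  by_cases hm : m = 0
  · subst hm
    simp only [push, if_true, map_zero, add_zero, zero_add]
    rw [adv_notExit ψ h]; rfl
  · have : push i m s = (i, m) :: s := if_neg hm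
    rw [this, adv_exit]

/-- every valid stack is a push on a stack not exiting through `i`, either trivially or not -/
theorem stack_cases {s : List (ZMod r × ZMod N)} (hs : Valid ψ s) (i : ZMod r) :
    ∃ i0 m0 t, NotExit ψ i0 t ∧ Valid ψ t ∧ s = push i0 m0 t ∧ i = i0 + ψ m0 := by
  by_cases h : NotExit ψ i s
  · exact ⟨i, 0, s, h, hs, by simp [push], by simp⟩
  · cases s with
    | nil => exact absurd (fun c hc => by simp at hc) h
    | cons a t =>
      refine ⟨a.1, a.2, t, hs.2.1, hs.2.2, ?_, ?_⟩
      · simp [push, hs.1]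
      · by_contra hne
        apply h
        intro c hc
        simp only [List.head?_cons, Option.mem_def, Option.some.injEq] at hc
        subst hc
        exact fun h => hne h.symm

theorem valid_adv {s : List (ZMod r × ZMod N)} (hs : Valid ψ s) (i : ZMod r) (m : ZMod N) :
    Valid ψ (adv ψ i m s) := by
  obtain ⟨i0, m0, t, h1, h2, rfl, rfl⟩ := stack_cases ψ hs i
  rw [adv_push ψ h1]
  exact valid_push ψ h1 h2 _

theorem adv_zero {s : List (ZMod r × ZMod N)} (hs : Valid ψ s) (i : ZMod r) :
    adv ψ i 0 s = s := by
  obtain ⟨i0, m0, t, h1, h2, rfl, rfl⟩ := stack_cases ψ hs i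
  rw [adv_push ψ h1, add_zero]

theorem adv_adv {s : List (ZMod r × ZMod N)} (hs : Valid ψ s) (i : ZMod r) (m m' : ZMod N) :
    adv ψ (i + ψ m) m' (adv ψ i m s) = adv ψ i (m + m') s := by
  obtain ⟨i0, m0, t, h1, h2, rfl, rfl⟩ := stack_cases ψ hs i
  rw [adv_push ψ h1, adv_push ψ h1, add_assoc, ← map_add, adv_push ψ h1, add_assoc]

def Stack : Type := {s : List (ZMod r × ZMod N) // Valid ψ s}

/-- The permutation of stacks given by one step. -/
noncomputable def stepPerm (i : ZMod r) : Equiv.Perm (Stack ψ) where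
  toFun s := ⟨adv ψ i 1 s.1, valid_adv ψ s.2 _ _⟩
  invFun s := ⟨adv ψ (i + 1) (-1) s.1, valid_adv ψ s.2 _ _⟩
  left_inv s := Subtype.ext (by
    have := adv_adv ψ s.2 i 1 (-1)
    rw [map_one, add_neg_cancel, adv_zero ψ s.2] at this
    exact this)
  right_inv s := Subtype.ext (by
    have := adv_adv ψ s.2 (i + 1) (-1) 1
    rw [map_neg, map_one, neg_add_cancel, adv_zero ψ s.2, add_neg_cancel_right] at this
    exact this)

theorem treeProp_of_sigma [NeZero N] {Gd : Type*} (C : ZMod r → Gd → Gd) (σ : Gd → Stack ψ)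
    (hσ : ∀ i e, σ (C i e) = stepPerm ψ i (σ e)) :
    TreeProp C N (fun e => (σ e).1.length) (fun x => NotExit ψ x.2 (σ x.1).1) := by
  have hit : ∀ (x : Gd × ZMod r) (m : ℕ),
      (σ ((tau C)^[m] x).1).1 = adv ψ x.2 (m : ZMod N) (σ x.1).1 := by
    intro x m
    induction m with
    | zero => simp [adv_zero ψ (σ x.1).2]
    | succ m ih =>
      rw [iterate_succ_apply']
      show (σ (C ((tau C)^[m] x).2 ((tau C)^[m] x).1)).1 = _
      rw [hσ, tau_snd]
      show adv ψ _ 1 _ = _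
      rw [ih, Nat.cast_succ, ← adv_adv ψ (σ x.1).2, map_natCast]
  have h0 : ∀ m, 0 < m → m < N → (m : ZMod N) ≠ 0 := by
    intro m h0 h1 h
    rw [ZMod.natCast_eq_zero_iff] at h
    exact absurd (Nat.le_of_dvd h0 h) (by omega)
  refine ⟨?_, ?_, ?_⟩
  · intro x
    obtain ⟨i0, m0, t, h1, h2, h3, h4⟩ := stack_cases ψ (σ x.1).2 x.2
    refine ⟨(-m0).val, ?_⟩
    rw [hit, tau_snd, ← map_natCast ψ, ZMod.natCast_zmod_val, h3, h4, adv_push ψ h1]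
    simp only [map_neg, add_neg_cancel, push, if_true, add_neg_cancel_right]
    exact h1
  · intro x hx m hm hmN
    rw [hit, adv_notExit ψ hx, push, if_neg (h0 m hm hmN)]
    rfl
  · intro x y h hx hy
    refine Prod.ext h ?_
    simp only [NotExit, not_forall, not_not] at hx hy
    obtain ⟨c, hc, h1⟩ := hx
    obtain ⟨c', hc', h2⟩ := hy
    rw [h] at hc
    rw [Option.mem_def] at hc hc'
    rw [hc] at hc'
    cases hc'
    rw [← h1, ← h2]

theorem stepPerm_prod {n : ℕ} (h : (n : ZMod N) = 0) (s : Stack ψ) :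
    (((List.range n).map (fun j : ℕ => MulOpposite.op (stepPerm ψ (j : ZMod r)))).prod).unop s = s := by
  have : ∀ n : ℕ, ((((List.range n).map
      (fun j : ℕ => MulOpposite.op (stepPerm ψ (j : ZMod r)))).prod).unop s).1
        = adv ψ 0 (n : ZMod N) s.1 := by
    intro n
    induction n with
    | zero => simp [adv_zero ψ s.2]
    | succ n ih =>
      rw [List.range_succ, List.map_append, List.prod_append]
      simp only [List.map_cons, List.map_nil, List.prod_cons, List.prod_nil, mul_one,
        MulOpposite.unop_mul, MulOpposite.unop_op, Equiv.Perm.mul_apply]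
      show adv ψ _ 1 _ = _
      rw [ih, Nat.cast_succ, ← adv_adv ψ s.2, map_natCast, zero_add]
  apply Subtype.ext
  rw [this, h, adv_zero ψ s.2]

end Adv

section KOne

/-- `b` or its inverse. -/
def sp {M : Type*} [Group M] (b : M) (s : Bool) : M := if s = true then b else b⁻¹

theorem map_sp {M M' : Type*} [Group M] [Group M'] (f : M →* M') (b : M) (s : Bool) :
    f (sp b s) = sp (f b) s := by
  unfold sp; split_ifs <;> simp

theorem mk_sp {α : Type*} (b : α) (s : Bool) :
    FreeGroup.mk [(b, s)] = sp (FreeGroup.of b) s := by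
  cases s <;> rfl

theorem isReduced_append_of_not {α : Type*} {A B : List (α × Bool)} {c : α × Bool}
    (hA : FreeGroup.IsReduced (A ++ [c])) (hB : FreeGroup.IsReduced B)
    (h : ∀ V, B ≠ (c.1, !c.2) :: V) : FreeGroup.IsReduced (A ++ [c] ++ B) := by
  cases B with
  | nil => simpa using hA
  | cons d V =>
    refine FreeGroup.IsReduced.append_overlap hA ?_ (by simp)
    rw [List.singleton_append, FreeGroup.isReduced_cons_cons]
    refine ⟨fun h1 => ?_, hB⟩
    by_contra h2
    apply h V
    congr 1
    refine Prod.ext h1.symm ?_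
    simp only
    cases hc : c.2 <;> cases hd : d.2 <;> simp_all

theorem pp_lemma {α : Type*} [DecidableEq α] {a1 a2 c d : α × Bool} {U M M' : List (α × Bool)}
    (hU : FreeGroup.IsReduced U)
    (h1 : U = a1 :: a2 :: M) (h2 : U = M' ++ [c, d]) (h3 : 3 ≤ U.length) (v : FreeGroup α)
    (hv : ∀ V, v.toWord ≠ (d.1, !d.2) :: (c.1, !c.2) :: V) :
    ∃ V, (FreeGroup.mk U * v).toWord = a1 :: a2 :: V := by
  have hred : FreeGroup.IsReduced v.toWord := FreeGroup.isReduced_toWord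
  have e : FreeGroup.mk U * v = FreeGroup.mk (U ++ v.toWord) := by
    rw [← FreeGroup.mul_mk, FreeGroup.mk_toWord]
  by_cases hd : ∃ V, v.toWord = (d.1, !d.2) :: V
  · obtain ⟨V, hV⟩ := hd
    have e2 : FreeGroup.mk (U ++ v.toWord) = FreeGroup.mk (M' ++ [c] ++ V) := by
      rw [hV, h2]
      apply Quot.sound
      have := FreeGroup.Red.Step.not (L₁ := M' ++ [c]) (L₂ := V) (x := d.1) (b := d.2)
      simpa using this
    have hM' : M'.length = M.length := by
      have := congrArg List.length (h1.symm.trans h2)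
      simp at this; omega
    have hr : FreeGroup.IsReduced (M' ++ [c] ++ V) := by
      apply isReduced_append_of_not
      · exact hU.infix ⟨[], [d], by rw [h2]; simp⟩
      · exact hred.infix ⟨[(d.1, !d.2)], [], by rw [hV]; simp⟩
      · intro V' hV'
        exact hv V' (by rw [hV, hV'])
    rw [e, e2, FreeGroup.toWord_mk, hr.reduce_eq]
    have h4 : a1 :: a2 :: M = (M' ++ [c]) ++ [d] := by rw [← h1, h2]; simp
    have h5 : M ≠ [] := by
      rintro rfl
      rw [h1] at h3; simp at h3
    obtain ⟨M1, d', rfl⟩ : ∃ M1 d', M = M1 ++ [d'] :=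
      ⟨M.dropLast, M.getLast h5, (List.dropLast_append_getLast h5).symm⟩
    have h6 : (a1 :: a2 :: M1) ++ [d'] = (M' ++ [c]) ++ [d] := h4
    have h7 := (List.append_inj' h6 rfl).1
    rw [← h7]
    exact ⟨M1 ++ V, rfl⟩
  · push Not at hd
    have hr : FreeGroup.IsReduced (U ++ v.toWord) := by
      have : U = (M' ++ [c]) ++ [d] := by rw [h2]; simp
      rw [this]
      apply isReduced_append_of_not
      · rw [← this]; exact hU
      · exact hred
      · exact hd
    rw [e, FreeGroup.toWord_mk, hr.reduce_eq, h1]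
    exact ⟨M ++ v.toWord, rfl⟩

/-- the word `b^{ε} x ... b^{ε} x b^e` -/
def uWord {r : ℕ} (ε : ZMod r → Bool) (l : List (ZMod r)) (e : Bool) :
    List (Option (ZMod r) × Bool) :=
  (l.flatMap (fun i => [(none, ε i), (some i, true)])) ++ [(none, e)]

theorem uWord_reduced {r : ℕ} (ε : ZMod r → Bool) (l : List (ZMod r)) (e : Bool) :
    FreeGroup.IsReduced (uWord ε l e) := by
  induction l with
  | nil => exact FreeGroup.IsReduced.singleton
  | cons i l ih =>
    have : uWord ε (i :: l) e = (none, ε i) :: (some i, true) :: uWord ε l e := by simp [uWord]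
    rw [this, FreeGroup.isReduced_cons_cons]
    refine ⟨fun h => by simp at h, ?_⟩
    cases l with
    | nil =>
      simp only [uWord, List.flatMap_nil, List.nil_append]
      rw [FreeGroup.isReduced_cons_cons]
      exact ⟨fun h => by simp at h, FreeGroup.IsReduced.singleton⟩
    | cons j l =>
      have h2 : uWord ε (j :: l) e = (none, ε j) :: (some j, true) :: uWord ε l e := by
        simp [uWord]
      rw [h2] at ih ⊢
      rw [FreeGroup.isReduced_cons_cons]
      exact ⟨fun h => by simp at h, ih⟩

theorem mk_uWord {r : ℕ} (ε : ZMod r → Bool) (l : List (ZMod r)) (e : Bool) :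
    FreeGroup.mk (uWord ε l e) = (l.map (fun i => sp (FreeGroup.of (none : Option (ZMod r))) (ε i)
      * FreeGroup.of (some i))).prod * sp (FreeGroup.of (none : Option (ZMod r))) e := by
  induction l with
  | nil => simp [uWord, mk_sp]
  | cons i l ih =>
    have : uWord ε (i :: l) e = [(none, ε i)] ++ ([(some i, true)] ++ uWord ε l e) := by
      simp [uWord]
    rw [this, ← FreeGroup.mul_mk, ← FreeGroup.mul_mk, ih, mk_sp]
    simp only [List.map_cons, List.prod_cons, mul_assoc]
    rfl

theorem kOne_exists (r : ℕ) [NeZero r] (ε : ZMod r → Bool) :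
    ∃ (K : Type) (_ : Group K) (b : K) (x : ZMod r → K), Injective (FreeGroup.lift x) ∧
      ((List.range r).map (fun j : ℕ => sp b (ε j) * x j)).prod = 1 := by
  obtain ⟨k, rfl⟩ : ∃ k, r = k + 1 := ⟨r - 1, by have := NeZero.ne r; omega⟩
  rcases Nat.eq_zero_or_pos k with rfl | hk
  · refine ⟨FreeGroup (ZMod (0+1)), inferInstance, sp (FreeGroup.of 0) (!(ε 0)), FreeGroup.of, ?_, ?_⟩
    · have : FreeGroup.lift (FreeGroup.of (α := ZMod (0+1))) = MonoidHom.id _ := by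
        ext; simp
      rw [this]; exact injective_id
    · simp only [zero_add, List.range_one, List.map_cons, List.map_nil, List.prod_cons,
        List.prod_nil, mul_one, Nat.cast_zero]
      cases ε 0 <;> simp [sp]
  let l : List (ZMod (k+1)) := (List.range k).map (fun j : ℕ => (j : ZMod (k+1)))
  have hl : l ≠ [] := by simp [l]; omega
  let e : Bool := ε (k : ℕ)
  let U := uWord ε l e
  obtain ⟨i0, l1, hl1⟩ : ∃ i0 l1, l = i0 :: l1 := List.exists_cons_of_ne_nil hl
  obtain ⟨l2, i2, hl2⟩ : ∃ l2 i2, l = l2 ++ [i2] :=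
      ⟨l.dropLast, l.getLast hl, (List.dropLast_append_getLast hl).symm⟩
  have hUr : FreeGroup.IsReduced U := uWord_reduced ε l e
  have hU1 : U = (none, ε i0) :: (some i0, true) :: uWord ε l1 e := by simp [U, uWord, hl1]
  have hU2 : U = (l2.flatMap (fun i => [(none, ε i), (some i, true)]) ++ [(none, ε i2)])
      ++ [(some i2, true), (none, e)] := by simp [U, uWord, hl2]
  have hUl : 3 ≤ U.length := by rw [hU2]; simp
  have hI : FreeGroup.IsReduced (FreeGroup.invRev U) := by
    rw [FreeGroup.isReduced_iff_reduce_eq, FreeGroup.reduce_invRev, hUr.reduce_eq]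
  have hI1 : FreeGroup.invRev U = (none, !e) :: (some i2, false) ::
      FreeGroup.invRev (l2.flatMap (fun i => [(none, ε i), (some i, true)]) ++ [(none, ε i2)]) := by
    rw [hU2]; simp [FreeGroup.invRev]
  have hI2 : FreeGroup.invRev U = FreeGroup.invRev (uWord ε l1 e) ++
      [(some i0, false), (none, !(ε i0))] := by
    rw [hU1]; simp [FreeGroup.invRev]
  have hIl : 3 ≤ (FreeGroup.invRev U).length := by rw [FreeGroup.invRev_length]; exact hUl
  let x : ZMod (k+1) → FreeGroup (Option (ZMod (k+1))) := fun i =>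
    if i = (k : ℕ) then (FreeGroup.mk U)⁻¹ else FreeGroup.of (some i)
  have hlt : ∀ j < k, (j : ZMod (k+1)) ≠ (k : ℕ) := by
    intro j hj h
    rw [ZMod.natCast_eq_natCast_iff'] at h
    rw [Nat.mod_eq_of_lt (by omega), Nat.mod_eq_of_lt (by omega)] at h
    omega
  refine ⟨FreeGroup (Option (ZMod (k+1))), inferInstance, FreeGroup.of none, x, ?_, ?_⟩
  · have : Nontrivial (ZMod (k+1)) := by
      have : Fact (1 < k+1) := ⟨by omega⟩
      infer_instance
    let pX : ZMod (k+1) → List (Option (ZMod (k+1)) × Bool) := fun i =>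
      if i = (k : ℕ) then [(none, !e), (some i2, false)] else [(some i, true)]
    let pY : ZMod (k+1) → List (Option (ZMod (k+1)) × Bool) := fun i =>
      if i = (k : ℕ) then [(none, ε i0), (some i0, true)] else [(some i, false)]
    let X : ZMod (k+1) → Set (FreeGroup (Option (ZMod (k+1)))) := fun i =>
      {v | pX i <+: v.toWord}
    let Y : ZMod (k+1) → Set (FreeGroup (Option (ZMod (k+1)))) := fun i =>
      {v | pY i <+: v.toWord}
    have hdis : ∀ (p q : List (Option (ZMod (k+1)) × Bool)), ¬ p <+: q → ¬ q <+: p →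
        Disjoint {v : FreeGroup (Option (ZMod (k+1))) | p <+: v.toWord} {v | q <+: v.toWord} := by
      intro p q h1 h2
      rw [Set.disjoint_left]
      intro v hp hq
      rcases List.prefix_or_prefix_of_prefix hp hq with h | h
      · exact h1 h
      · exact h2 h
    have htail : ∀ (s : Bool) (i : ZMod (k+1)) (v : FreeGroup (Option (ZMod (k+1)))),
        ¬ [(some i, !s)] <+: v.toWord →
        [(some i, s)] <+: (FreeGroup.mk [(some i, s)] * v).toWord := by
      intro s i v hv
      have hr : FreeGroup.IsReduced ([] ++ [(some i, s)] ++ v.toWord) := by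
        apply isReduced_append_of_not
        · exact FreeGroup.IsReduced.singleton
        · exact FreeGroup.isReduced_toWord
        · intro V hV
          apply hv
          rw [hV]
          exact ⟨V, rfl⟩
      have h1 : FreeGroup.mk [(some i, s)] * v = FreeGroup.mk ([] ++ [(some i, s)] ++ v.toWord) := by
        rw [List.nil_append, ← FreeGroup.mul_mk, FreeGroup.mk_toWord]
      rw [h1, FreeGroup.toWord_mk, hr.reduce_eq]
      exact ⟨v.toWord, rfl⟩
    refine FreeGroup.injective_lift_of_ping_pong x X Y ?_ ?_ ?_ ?_ ?_ ?_
    · intro i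
      by_cases hi : i = (k : ℕ)
      · refine ⟨FreeGroup.mk (FreeGroup.invRev U), ?_⟩
        simp only [X, pX, if_pos hi, Set.mem_ofPred_eq, FreeGroup.toWord_mk, hI.reduce_eq]
        rw [hI1]
        exact ⟨_, rfl⟩
      · refine ⟨FreeGroup.of (some i), ?_⟩
        simp [X, pX, if_neg hi]
    · intro i j hij
      have hji := hij.symm
      apply hdis <;> simp only [pX] <;> split_ifs <;> simp_all
    · intro i j hij
      have hji := hij.symm
      apply hdis <;> simp only [pY] <;> split_ifs <;> simp_all
    · intro i j
      apply hdis <;> simp only [pX, pY] <;> split_ifs <;> simp_all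
    · rintro i _ ⟨v, hv, rfl⟩
      simp only [Set.mem_compl_iff, Y, X, Set.mem_ofPred_eq, smul_eq_mul, x, pX, pY] at hv ⊢
      split_ifs at hv ⊢ with hi
      · rw [FreeGroup.inv_mk]
        obtain ⟨V, hV⟩ := pp_lemma hI hI1 hI2 hIl v (by
          intro V hV
          apply hv
          rw [hV]
          simp)
        rw [hV]
        exact ⟨V, rfl⟩
      · exact htail true i v hv
    · rintro i _ ⟨v, hv, rfl⟩
      simp only [Set.mem_compl_iff, Y, X, Set.mem_ofPred_eq, smul_eq_mul, x, pX, pY,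
        Pi.inv_apply] at hv ⊢
      split_ifs at hv ⊢ with hi
      · rw [inv_inv]
        obtain ⟨V, hV⟩ := pp_lemma hUr hU1 hU2 hUl v (by
          intro V hV
          apply hv
          rw [hV]
          simp)
        rw [hV]
        exact ⟨V, rfl⟩
      · exact htail false i v hv
  · rw [List.range_succ, List.map_append, List.prod_append]
    simp only [List.map_cons, List.map_nil, List.prod_cons, List.prod_nil, mul_one]
    have h1 : x (k : ℕ) = (FreeGroup.mk U)⁻¹ := if_pos rfl
    have h2 : ((List.range k).map (fun j : ℕ => sp (FreeGroup.of none) (ε j) * x j)) =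
        l.map (fun i => sp (FreeGroup.of (none : Option (ZMod (k+1)))) (ε i)
          * FreeGroup.of (some i)) := by
      simp only [l, List.map_map]
      apply List.map_congr_left
      intro j hj
      rw [List.mem_range] at hj
      simp [x, hlt j hj]
    rw [h1, h2, mk_uWord, ← mul_assoc]
    exact mul_inv_cancel _

end KOne

section Sigma

/-- two-element family of groups -/
def fam (F K : Type) : Bool → Type
  | true => F
  | false => K

instance famGroup (F K : Type) [hF : Group F] [hK : Group K] : ∀ i, Group (fam F K i)
  | true => hF
  | false => hK

def famHom {H F K : Type} [Group H] [Group F] [Group K] (f : H →* F) (g : H →* K) :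
    ∀ i, H →* fam F K i
  | true => f
  | false => g

theorem amalgam {H F K : Type} [Group H] [Group F] [Group K] (f : H →* F) (g : H →* K)
    (hf : Injective f) (hg : Injective g) :
    ∃ (G : Type) (_ : Group G) (jF : F →* G) (jK : K →* G), Injective jK ∧
      ∀ h, jF (f h) = jK (g h) := by
  have hinj : ∀ i, Injective (famHom f g i) := by
    rintro (_ | _)
    · exact hg
    · exact hf
  refine ⟨Monoid.PushoutI (famHom f g), inferInstance,
    (Monoid.PushoutI.of true : fam F K true →* Monoid.PushoutI (famHom f g)),
    (Monoid.PushoutI.of false : fam F K false →* Monoid.PushoutI (famHom f g)),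
    Monoid.PushoutI.of_injective hinj false, ?_⟩
  intro h
  exact (Monoid.PushoutI.of_apply_eq_base (famHom f g) true h).trans
    (Monoid.PushoutI.of_apply_eq_base (famHom f g) false h).symm

theorem prod_range_mul {M : Type*} [Monoid M] {r : ℕ} (f : ZMod r → M) (n : ℕ) :
    ((List.range (n * r)).map (fun j : ℕ => f j)).prod =
      (((List.range r).map (fun j : ℕ => f j)).prod) ^ n := by
  induction n with
  | zero => simp
  | succ n ih =>
    rw [Nat.succ_mul, List.range_add, List.map_append, List.prod_append, ih, pow_succ,
      List.map_map]
    congr 3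
    funext j
    simp

theorem sigma_exists {r : ℕ} [NeZero r] {F : Type} [Group F] (w : ZMod r → F)
    (hw : Injective (FreeGroup.lift w)) (ε : ZMod r → Bool) {S : Type} (s0 : S)
    (c : ZMod r → Equiv.Perm S) (n : ℕ)
    (hc : ∀ s, (((List.range (n * r)).map (fun j : ℕ => MulOpposite.op (c j))).prod).unop s = s) :
    ∃ (G : Type) (_ : Group G) (jF : F →* G) (b : G) (σ : G → S),
      ((List.range (n * r)).map (fun j : ℕ => sp b (ε j) * jF (w j))).prod = 1 ∧
      (∀ g, σ (g * b) = σ g) ∧ ∀ g i, σ (g * jF (w i)) = c i (σ g) := by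
  obtain ⟨K1, _, b1, x1, hinj1, hrel1⟩ := kOne_exists r ε
  let b : K1 × (Equiv.Perm S)ᵐᵒᵖ := (b1, 1)
  let x : ZMod r → K1 × (Equiv.Perm S)ᵐᵒᵖ := fun i => (x1 i, MulOpposite.op (c i))
  have hx : Injective (FreeGroup.lift x) := by
    have : (MonoidHom.fst _ _).comp (FreeGroup.lift x) = FreeGroup.lift x1 := by
      ext i; simp [x]
    have h2 : Injective ((MonoidHom.fst _ _).comp (FreeGroup.lift x)) := by rw [this]; exact hinj1
    rw [MonoidHom.coe_comp] at h2
    exact Injective.of_comp h2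
  have hrel : ((List.range (n * r)).map (fun j : ℕ => sp b (ε j) * x j)).prod = 1 := by
    apply Prod.ext
    · have := map_list_prod (MonoidHom.fst K1 (Equiv.Perm S)ᵐᵒᵖ)
        ((List.range (n * r)).map (fun j : ℕ => sp b (ε j) * x j))
      rw [MonoidHom.coe_fst] at this
      rw [this, List.map_map]
      have h3 : (Prod.fst ∘ fun j : ℕ => sp b (ε j) * x j) = fun j : ℕ => sp b1 (ε j) * x1 j := by
        funext j
        show (sp b (ε j)).1 * x1 j = _
        congr 1
        exact map_sp (MonoidHom.fst K1 (Equiv.Perm S)ᵐᵒᵖ) b (ε j)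
      rw [h3, prod_range_mul (fun j => sp b1 (ε j) * x1 j), hrel1, one_pow]
      rfl
    · have := map_list_prod (MonoidHom.snd K1 (Equiv.Perm S)ᵐᵒᵖ)
        ((List.range (n * r)).map (fun j : ℕ => sp b (ε j) * x j))
      rw [MonoidHom.coe_snd] at this
      rw [this, List.map_map]
      have h3 : (Prod.snd ∘ fun j : ℕ => sp b (ε j) * x j) =
          fun j : ℕ => MulOpposite.op (c j) := by
        funext j
        show (sp b (ε j)).2 * _ = _
        have : (sp b (ε j)).2 = sp (1 : (Equiv.Perm S)ᵐᵒᵖ) (ε j) :=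
          map_sp (MonoidHom.snd K1 (Equiv.Perm S)ᵐᵒᵖ) b (ε j)
        rw [this]
        have : sp (1 : (Equiv.Perm S)ᵐᵒᵖ) (ε j) = 1 := by unfold sp; split_ifs <;> simp
        rw [this, one_mul]
      rw [h3]
      apply MulOpposite.unop_injective
      ext s
      rw [hc s]; rfl
  obtain ⟨G, _, jF, jK, hjK, hjj⟩ := amalgam (FreeGroup.lift w) (FreeGroup.lift x) hw hx
  have hjx : ∀ i, jF (w i) = jK (x i) := by
    intro i
    have := hjj (FreeGroup.of i)
    simpa using this
  have hdec : ∀ g : G, ∃ κ : K1 × (Equiv.Perm S)ᵐᵒᵖ,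
      g = ((g : G ⧸ jK.range).out : G) * jK κ := by
    intro g
    obtain ⟨⟨h, κ, hκ⟩, hh⟩ := QuotientGroup.mk_out_eq_mul jK.range g
    refine ⟨κ⁻¹, ?_⟩
    rw [hh, map_inv, hκ]
    simp
  choose κ hκ using hdec
  have hmul : ∀ g k, κ (g * jK k) = κ g * k := by
    intro g k
    apply hjK
    have h1 := hκ (g * jK k)
    have h2 : ((g * jK k : G) : G ⧸ jK.range) = (g : G ⧸ jK.range) := by
      rw [QuotientGroup.mk_mul_of_mem]
      exact ⟨k, rfl⟩
    rw [h2] at h1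
    have h3 := hκ g
    rw [map_mul]
    apply mul_left_cancel (a := ((g : G ⧸ jK.range).out : G))
    rw [← h1, ← mul_assoc, ← h3]
  refine ⟨G, inferInstance, jF, jK b, fun g => (κ g).2.unop s0, ?_, ?_, ?_⟩
  · have h3 : (fun j : ℕ => sp (jK b) (ε j) * jF (w j)) = fun j : ℕ => jK (sp b (ε j) * x j) := by
      funext j
      rw [map_mul, map_sp, hjx]
    rw [h3]
    have := map_list_prod jK ((List.range (n * r)).map (fun j : ℕ => sp b (ε j) * x j))
    rw [hrel, map_one, List.map_map] at this
    exact this.symm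
  · intro g
    show (κ (g * jK b)).2.unop s0 = _
    rw [hmul]
    show ((κ g).2 * 1).unop s0 = _
    rw [mul_one]
  · intro g i
    show (κ (g * jF (w i))).2.unop s0 = _
    rw [hjx, hmul]
    rfl

end Sigma

section Tree
variable {A G : Type} [Group G] {r : ℕ}

abbrev Phi (A : Type) := FreeGroup (A ⊕ Unit)

def bb {A : Type} : Phi A := FreeGroup.of (Sum.inr ())

def Tw (ε : ZMod r → Bool) (w : ZMod r → FreeGroup A) (i : ZMod r) : Phi A :=
  sp bb (ε i) * FreeGroup.map Sum.inl (w i)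

def Qw (ε : ZMod r → Bool) (w : ZMod r → FreeGroup A) (N : ℕ) (i : ZMod r) : Phi A :=
  ((List.range N).map (fun j : ℕ => Tw ε w (i + j))).prod

def Cel (π : Phi A →* G) (ε : ZMod r → Bool) (w : ZMod r → FreeGroup A) (i : ZMod r) : G :=
  (if ε i = true then π bb else 1) * π (FreeGroup.map Sum.inl (w i)) *
    (if ε (i + 1) = true then 1 else (π bb)⁻¹)

def Cf (π : Phi A →* G) (ε : ZMod r → Bool) (w : ZMod r → FreeGroup A) (i : ZMod r) (e : G) : G :=
  e * Cel π ε w i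

def hof (π : Phi A →* G) (ε : ZMod r → Bool) (x : G × ZMod r) : G :=
  x.1 * (if ε x.2 = true then 1 else π bb)

variable (π : Phi A →* G) (ε : ZMod r → Bool) (w : ZMod r → FreeGroup A)

theorem hof_tau (x : G × ZMod r) :
    hof π ε (tau (Cf π ε w) x) = hof π ε x * π (Tw ε w x.2) := by
  by_cases h1 : ε x.2 = true <;> by_cases h2 : ε (x.2 + 1) = true <;>
    simp [hof, tau, Cf, Cel, Tw, sp, h1, h2, mul_assoc]

theorem hof_iter (x : G × ZMod r) (m : ℕ) :
    hof π ε ((tau (Cf π ε w))^[m] x) = hof π ε x * π (Qw ε w m x.2) := by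
  induction m with
  | zero => simp [Qw]
  | succ m ih =>
    rw [iterate_succ_apply', hof_tau, ih, tau_snd, mul_assoc, ← map_mul]
    simp [Qw, List.range_succ]

theorem hof_inj {x y : G × ZMod r} (h : hof π ε x = hof π ε y) (h2 : x.2 = y.2) : x = y := by
  refine Prod.ext ?_ h2
  simp only [hof, h2] at h
  exact mul_right_cancel h

theorem Qw_succ (N : ℕ) (hN : (N : ZMod r) = 0) (i : ZMod r) :
    Tw ε w i * Qw ε w N (i + 1) = Qw ε w N i * Tw ε w i := by
  have h1 : Qw ε w (N + 1) i = Qw ε w N i * Tw ε w i := by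
    simp [Qw, List.range_succ, hN]
  have h2 : Qw ε w (N + 1) i = Tw ε w i * Qw ε w N (i + 1) := by
    simp only [Qw, List.range_succ_eq_map, List.map_cons, List.prod_cons, List.map_map]
    congr 3
    · simp
    · funext j
      simp only [Function.comp_apply, Nat.cast_succ]
      congr 1
      ring
  rw [← h1, h2]

theorem Qw_one [NeZero r] {M : Type*} [Group M] (f : Phi A →* M) (N : ℕ) (hN : (N : ZMod r) = 0)
    (h : f (Qw ε w N 0) = 1) (i : ZMod r) : f (Qw ε w N i) = 1 := by
  have : ∀ m : ℕ, f (Qw ε w N (m : ZMod r)) = 1 := by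
    intro m
    induction m with
    | zero => simpa using h
    | succ m ih =>
      have := congrArg f (Qw_succ ε w N hN m)
      rw [map_mul, map_mul, ih, one_mul] at this
      rw [Nat.cast_succ]
      exact mul_eq_left.mp this
  have h2 := this i.val
  rwa [ZMod.natCast_zmod_val] at h2

theorem tau_period [NeZero r] (N : ℕ) (hN : (N : ZMod r) = 0) (h : π (Qw ε w N 0) = 1)
    (x : G × ZMod r) : (tau (Cf π ε w))^[N] x = x := by
  apply hof_inj π ε
  · rw [hof_iter, Qw_one ε w π N hN h, mul_one]
  · rw [tau_snd, hN, add_zero]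

theorem tree_exists [NeZero r] (n : ℕ) (hn : 0 < n) (hπ : Surjective π)
    (hker : π.ker = Subgroup.normalClosure {Qw ε w (n * r) 0})
    (hw : Injective (FreeGroup.lift w)) :
    ∃ d par, TreeProp (Cf π ε w) (n * r) d par := by
  have hr : 0 < r := Nat.pos_of_neZero r
  have : NeZero (n * r) := ⟨by positivity⟩
  let ψ : ZMod (n * r) →+* ZMod r := ZMod.castHom (Dvd.intro_left n rfl) (ZMod r)
  let s0 : Stack ψ := ⟨[], trivial⟩
  obtain ⟨G1, _, jF, b, σ, h1, h2, h3⟩ := sigma_exists w hw ε s0 (stepPerm ψ) n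
    (fun s => stepPerm_prod ψ (ZMod.natCast_self _) s)
  let f : Phi A →* G1 := FreeGroup.lift (Sum.elim (fun a => jF (FreeGroup.of a)) (fun _ => b))
  have hfl : ∀ u, f (FreeGroup.map Sum.inl u) = jF u := by
    intro u
    have : f.comp (FreeGroup.map Sum.inl) = jF := by
      ext a; simp [f]
    rw [← this]; rfl
  have hfb : f bb = b := by simp [f, bb]
  have hfk : π.ker ≤ f.ker := by
    rw [hker]
    apply Subgroup.normalClosure_le_normal
    rintro _ rfl
    show f _ = 1
    rw [Qw, map_list_prod, List.map_map, ← h1]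
    congr 2
    funext j
    simp [Tw, map_sp, hfb, hfl]
  let g : G →* G1 := π.liftOfSurjective hπ ⟨f, hfk⟩
  have hg : ∀ u, g (π u) = f u := fun u => MonoidHom.liftOfRightInverse_comp_apply π _ _ ⟨f, hfk⟩ u
  have h2' : ∀ g, σ (g * b⁻¹) = σ g := by
    intro g
    rw [← h2 (g * b⁻¹), inv_mul_cancel_right]
  refine ⟨_, _, treeProp_of_sigma ψ (Cf π ε w) (fun e => σ (g e)) ?_⟩
  intro i e
  simp only [Cf, Cel, map_mul]
  rw [← h3, hg, hfl, ← mul_assoc, ← mul_assoc]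
  have e1 : ∀ y, σ (y * g (if ε (i + 1) = true then 1 else (π bb)⁻¹)) = σ y := by
    intro y
    split_ifs
    · simp
    · rw [map_inv, hg, hfb, h2']
  rw [e1, h3, h3]
  congr 1
  split_ifs
  · rw [hg, hfb, h2]
  · simp

end Tree

section Paths
variable {A G : Type} [Group G] (π : Phi A →* G) (L : Subgroup G) (E : Set G)

/-- `u` spells a path from `g` using only `b`-edges in `E`. -/
inductive Pth : G → Phi A → Prop
  | one (g : G) : Pth g 1
  | aa (g : G) (a : A) : Pth g (FreeGroup.of (Sum.inl a))
  | bb (g : G) (h : g ∈ E) : Pth g OneRel.bb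
  | mul (g : G) (u v : Phi A) (hu : Pth g u) (hv : Pth (g * π u) v) : Pth g (u * v)
  | inv (g : G) (u : Phi A) (hu : Pth g u) : Pth (g * π u) u⁻¹

variable {π L E}

theorem Pth.mono {E' : Set G} (h : E ⊆ E') {g : G} {u : Phi A} (hu : Pth π E g u) :
    Pth π E' g u := by
  induction hu with
  | one g => exact .one g
  | aa g a => exact .aa g a
  | bb g hg => exact .bb g (h hg)
  | mul g u v _ _ ih1 ih2 => exact .mul g u v ih1 ih2
  | inv g u _ ih => exact .inv g u ih

theorem Pth.smul (hE : ∀ l ∈ L, ∀ g, g ∈ E → l * g ∈ E) {g : G} {u : Phi A} (hu : Pth π E g u)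
    {l : G} (hl : l ∈ L) : Pth π E (l * g) u := by
  induction hu with
  | one g => exact .one _
  | aa g a => exact .aa _ a
  | bb g hg => exact .bb _ (hE l hl g hg)
  | mul g u v _ _ ih1 ih2 => exact .mul _ u v ih1 (by rw [mul_assoc]; exact ih2)
  | inv g u _ ih => rw [← mul_assoc]; exact .inv _ u ih

theorem Pth.smul' (hE : ∀ l ∈ L, ∀ g, g ∈ E → l * g ∈ E) {g : G} {u : Phi A} (hu : Pth π E g u)
    {g' : G} (hl : g' * g⁻¹ ∈ L) : Pth π E g' u := by
  have := hu.smul hE hl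
  rwa [inv_mul_cancel_right] at this

theorem Pth.inl (g : G) (u : FreeGroup A) : Pth π E g (FreeGroup.map Sum.inl u) := by
  induction u using FreeGroup.induction_on generalizing g with
  | C1 => rw [map_one]; exact .one g
  | of a => exact .aa g a
  | inv_of a ih =>
    rw [map_inv]
    have := Pth.inv _ _ (ih (g * (π (FreeGroup.map Sum.inl (FreeGroup.of a)))⁻¹))
    rwa [inv_mul_cancel_right] at this
  | mul a b iha ihb => rw [map_mul]; exact .mul _ _ _ (iha g) (ihb _)

theorem Pth.exists_finite {X : Type*} (q : G → X) (g : G) (u : Phi A) :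
    ∃ Y : Set X, Y.Finite ∧ Pth π (q ⁻¹' Y) g u := by
  induction u using FreeGroup.induction_on generalizing g with
  | C1 => exact ⟨∅, Set.finite_empty, .one g⟩
  | of a =>
    rcases a with a | ⟨⟩
    · exact ⟨∅, Set.finite_empty, .aa g a⟩
    · exact ⟨{q g}, Set.finite_singleton _, .bb g rfl⟩
  | inv_of a ih =>
    obtain ⟨Y, h1, h2⟩ := ih (g * (π (FreeGroup.of a))⁻¹)
    have := Pth.inv _ _ h2
    rw [inv_mul_cancel_right] at this
    exact ⟨Y, h1, this⟩
  | mul a b iha ihb =>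
    obtain ⟨Y, h1, h2⟩ := iha g
    obtain ⟨Y', h1', h2'⟩ := ihb (g * π a)
    exact ⟨Y ∪ Y', h1.union h1', .mul _ _ _
      (h2.mono (Set.preimage_mono Set.subset_union_left))
      (h2'.mono (Set.preimage_mono Set.subset_union_right))⟩

variable (π L E) in
/-- The group of closed paths. -/
def Lt (hE : ∀ l ∈ L, ∀ g, g ∈ E → l * g ∈ E) : Subgroup (Phi A) where
  carrier := {u | Pth π E 1 u ∧ π u ∈ L}
  one_mem' := ⟨.one 1, by rw [map_one]; exact L.one_mem⟩
  mul_mem' := by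
    rintro u v ⟨h1, h2⟩ ⟨h3, h4⟩
    refine ⟨.mul _ _ _ h1 (h3.smul' hE (by simpa using h2)), ?_⟩
    rw [map_mul]; exact L.mul_mem h2 h4
  inv_mem' := by
    rintro u ⟨h1, h2⟩
    refine ⟨(Pth.inv _ _ h1).smul' hE (by simpa using h2), ?_⟩
    rw [map_inv]; exact L.inv_mem h2

variable (π L E) in
def Reach (g : G) : Prop := ∃ u, Pth π E 1 u ∧ π u * g⁻¹ ∈ L

theorem Reach.path (hE : ∀ l ∈ L, ∀ g, g ∈ E → l * g ∈ E) {g : G} {u : Phi A}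
    (hg : Reach π L E g) (hu : Pth π E g u) : Reach π L E (g * π u) := by
  obtain ⟨v, h1, h2⟩ := hg
  refine ⟨v * u, .mul _ _ _ h1 (hu.smul' hE (by simpa using h2)), ?_⟩
  rw [map_mul]
  simpa [mul_assoc] using h2

theorem Reach.path_iff (hE : ∀ l ∈ L, ∀ g, g ∈ E → l * g ∈ E) {g : G} {u : Phi A}
    (hu : Pth π E g u) : Reach π L E (g * π u) ↔ Reach π L E g := by
  refine ⟨fun h => ?_, fun h => h.path hE hu⟩
  have := h.path hE (Pth.inv _ _ hu)
  rwa [map_inv, mul_inv_cancel_right] at this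

open Classical in
/-- the class of an element of the group of closed paths -/
noncomputable def cls {hE : ∀ l ∈ L, ∀ g, g ∈ E → l * g ∈ E} (R : Subgroup (Lt π L E hE)) [R.Normal]
    (z : Phi A) : (Lt π L E hE) ⧸ R :=
  if h : z ∈ Lt π L E hE then QuotientGroup.mk (⟨z, h⟩ : Lt π L E hE) else 1

theorem cls_mul {hE : ∀ l ∈ L, ∀ g, g ∈ E → l * g ∈ E} (R : Subgroup (Lt π L E hE)) [R.Normal]
    {z z' : Phi A} (h : z ∈ Lt π L E hE) (h' : z' ∈ Lt π L E hE) :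
    cls R (z * z') = cls R z * cls R z' := by
  rw [cls, cls, cls, dif_pos h, dif_pos h', dif_pos (mul_mem h h'), ← QuotientGroup.mk_mul]
  rfl

theorem cls_one {hE : ∀ l ∈ L, ∀ g, g ∈ E → l * g ∈ E} (R : Subgroup (Lt π L E hE)) [R.Normal] :
    cls R (1 : Phi A) = 1 := by
  rw [cls, dif_pos (one_mem _)]
  rfl

variable {hE : ∀ l ∈ L, ∀ g, g ∈ E → l * g ∈ E} (R : Subgroup (Lt π L E hE)) [R.Normal]
  (t : G → Phi A)

open Classical in
noncomputable def kap (g : G) (u : Phi A) : (Lt π L E hE) ⧸ R :=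
  if Reach π L E g then cls R (t g * u * (t (g * π u))⁻¹) else 1

variable {t}

theorem kap_mem (ht : ∀ g, Reach π L E g → Pth π E 1 (t g) ∧ π (t g) * g⁻¹ ∈ L)
    {g : G} {u : Phi A} (hg : Reach π L E g) (hu : Pth π E g u) :
    t g * u * (t (g * π u))⁻¹ ∈ Lt π L E hE := by
  obtain ⟨h1, h2⟩ := ht g hg
  obtain ⟨h3, h4⟩ := ht _ (hg.path hE hu)
  have h5 : π (t g * u) * (π (t (g * π u)))⁻¹ ∈ L := by
    have := L.mul_mem h2 (L.inv_mem h4)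
    simpa [mul_assoc] using this
  refine ⟨?_, ?_⟩
  · refine .mul _ _ _ (.mul _ _ _ h1 (hu.smul' hE (by simpa using h2))) ?_
    refine (Pth.inv _ _ h3).smul' hE ?_
    simpa using h5
  · rw [map_mul, map_inv]; exact h5

theorem kap_mul (ht : ∀ g, Reach π L E g → Pth π E 1 (t g) ∧ π (t g) * g⁻¹ ∈ L)
    {g : G} {u v : Phi A} (hu : Pth π E g u) (hv : Pth π E (g * π u) v) :
    kap R t g (u * v) = kap R t g u * kap R t (g * π u) v := by
  unfold kap
  by_cases hg : Reach π L E g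
  · have hg' := hg.path hE hu
    rw [if_pos hg, if_pos hg, if_pos hg', ← cls_mul R (kap_mem ht hg hu) (kap_mem ht hg' hv)]
    congr 1
    rw [map_mul, ← mul_assoc g]
    group
  · have hg' : ¬ Reach π L E (g * π u) := by rwa [Reach.path_iff hE hu]
    rw [if_neg hg, if_neg hg, if_neg hg', one_mul]

theorem kap_one (g : G) : kap R t g 1 = 1 := by
  unfold kap
  split_ifs
  · rw [map_one, mul_one, mul_one, mul_inv_cancel, cls_one]
  · rfl

theorem kap_inv (ht : ∀ g, Reach π L E g → Pth π E 1 (t g) ∧ π (t g) * g⁻¹ ∈ L)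
    {g : G} {u : Phi A} (hu : Pth π E g u) :
    kap R t (g * π u) u⁻¹ = (kap R t g u)⁻¹ := by
  have := kap_mul R ht hu (Pth.inv _ _ hu)
  rw [mul_inv_cancel, kap_one] at this
  exact (inv_eq_of_mul_eq_one_right this.symm).symm

end Paths

section Act
variable {A G Γ : Type} [Group G] [Group Γ] (π : Phi A →* G)

/-- right translation with labels -/
def lperm (c : G) (l : G → Γ) : Equiv.Perm (G × Γ) where
  toFun y := (y.1 * c, y.2 * l y.1)
  invFun y := (y.1 * c⁻¹, y.2 * (l (y.1 * c⁻¹))⁻¹)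
  left_inv y := by simp
  right_inv y := by simp

def act (l : G → Γ) (ν : A → G → Γ) : Phi A →* (Equiv.Perm (G × Γ))ᵐᵒᵖ :=
  FreeGroup.lift (Sum.elim
    (fun a => MulOpposite.op (lperm (π (FreeGroup.of (Sum.inl a))) (ν a)))
    (fun _ => MulOpposite.op (lperm (π bb) l)))

variable {π} (l : G → Γ) (ν : A → G → Γ)

theorem act_mul (u v : Phi A) (y : G × Γ) :
    (act π l ν (u * v)).unop y = (act π l ν v).unop ((act π l ν u).unop y) := by
  rw [map_mul]; rfl

theorem act_inv (u : Phi A) (y : G × Γ) :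
    (act π l ν u⁻¹).unop ((act π l ν u).unop y) = y := by
  rw [← act_mul, mul_inv_cancel, map_one]; rfl

theorem act_bb (y : G × Γ) : (act π l ν bb).unop y = (y.1 * π bb, y.2 * l y.1) := by
  simp [act, bb, lperm]

theorem act_aa (a : A) (y : G × Γ) : (act π l ν (FreeGroup.of (Sum.inl a))).unop y =
    (y.1 * π (FreeGroup.of (Sum.inl a)), y.2 * ν a y.1) := by
  simp [act, lperm]

end Act

section ActPath
variable {A G : Type} [Group G] {π : Phi A →* G} {L : Subgroup G} {E : Set G}
  {hE : ∀ l ∈ L, ∀ g, g ∈ E → l * g ∈ E} (R : Subgroup (Lt π L E hE)) [R.Normal]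
  {t : G → Phi A}

theorem act_path (ht : ∀ g, Reach π L E g → Pth π E 1 (t g) ∧ π (t g) * g⁻¹ ∈ L)
    (l : G → (Lt π L E hE) ⧸ R) (hl : ∀ g ∈ E, l g = kap R t g bb)
    {g : G} {u : Phi A} (hu : Pth π E g u) (y : (Lt π L E hE) ⧸ R) :
    (act π l (fun a g => kap R t g (FreeGroup.of (Sum.inl a))) u).unop (g, y) =
      (g * π u, y * kap R t g u) := by
  induction hu generalizing y with
  | one g => rw [map_one, kap_one, map_one, mul_one, mul_one]; rfl
  | aa g a => rw [act_aa]
  | bb g hg => rw [act_bb, hl g hg]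
  | mul g u v hu hv ih1 ih2 =>
    rw [act_mul, ih1, ih2, map_mul, kap_mul R ht hu hv, mul_assoc, mul_assoc]
  | inv g u hu ih =>
    have h1 := ih (y * (kap R t g u)⁻¹)
    rw [inv_mul_cancel_right] at h1
    rw [← h1, act_inv, kap_inv R ht hu, map_inv, mul_inv_cancel_right]

theorem act_T {r : ℕ} (ε : ZMod r → Bool) (w : ZMod r → FreeGroup A)
    (ht : ∀ g, Reach π L E g → Pth π E 1 (t g) ∧ π (t g) * g⁻¹ ∈ L)
    (l : G → (Lt π L E hE) ⧸ R) (hl : ∀ g ∈ E, l g = kap R t g bb)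
    (x : G × ZMod r) (y : (Lt π L E hE) ⧸ R) :
    (act π l (fun a g => kap R t g (FreeGroup.of (Sum.inl a))) (Tw ε w x.2)).unop
        (hof π ε x, y) =
      (hof π ε (tau (Cf π ε w) x), y * theta Prod.fst (fun x => ε x.2)
        (fun x => kap R t (x.1 * (if ε x.2 = true then π bb else 1))
          (FreeGroup.map Sum.inl (w x.2))) l x) := by
  rw [hof_tau]
  unfold Tw
  rw [act_mul]
  by_cases h : ε x.2 = true
  · simp only [hof, sp, h, if_true, theta, mul_one]
    rw [act_bb, act_path R ht l hl (Pth.inl _ _)]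
    simp [mul_assoc]
  · simp only [hof, sp, h, theta, mul_one]
    have h1 := act_inv (π := π) l (fun a g => kap R t g (FreeGroup.of (Sum.inl a))) bb
      (x.1, y * (l x.1)⁻¹)
    rw [act_bb] at h1
    simp only [inv_mul_cancel_right] at h1
    simp only [Bool.false_eq_true, if_false, mul_one]
    rw [h1, act_path R ht l hl (Pth.inl _ _)]
    simp [mul_assoc]

theorem act_Q {r : ℕ} (ε : ZMod r → Bool) (w : ZMod r → FreeGroup A)
    (ht : ∀ g, Reach π L E g → Pth π E 1 (t g) ∧ π (t g) * g⁻¹ ∈ L)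
    (l : G → (Lt π L E hE) ⧸ R) (hl : ∀ g ∈ E, l g = kap R t g bb)
    (x : G × ZMod r) (y : (Lt π L E hE) ⧸ R) (m : ℕ) :
    (act π l (fun a g => kap R t g (FreeGroup.of (Sum.inl a))) (Qw ε w m x.2)).unop
        (hof π ε x, y) =
      (hof π ε ((tau (Cf π ε w))^[m] x), y * hol (tau (Cf π ε w)) Prod.fst (fun x => ε x.2)
        (fun x => kap R t (x.1 * (if ε x.2 = true then π bb else 1))
          (FreeGroup.map Sum.inl (w x.2))) l m x) := by
  induction m with
  | zero => simp [Qw, hol]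
  | succ m ih =>
    have h1 : Qw ε w (m + 1) x.2 = Qw ε w m x.2 * Tw ε w ((tau (Cf π ε w))^[m] x).2 := by
      rw [tau_snd]; simp [Qw, List.range_succ]
    rw [h1, act_mul, ih, act_T R ε w ht l hl, iterate_succ_apply', mul_assoc]
    congr 2
    simp [hol, List.range_succ]

theorem pth_Q {r : ℕ} (ε : ZMod r → Bool) (w : ZMod r → FreeGroup A)
    (x : G × ZMod r) (hx : ∀ m, ((tau (Cf π ε w))^[m] x).1 ∈ E) (m : ℕ) :
    Pth π E (hof π ε x) (Qw ε w m x.2) := by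
  induction m with
  | zero => simpa [Qw] using Pth.one _
  | succ m ih =>
    have h1 : Qw ε w (m + 1) x.2 = Qw ε w m x.2 * Tw ε w ((tau (Cf π ε w))^[m] x).2 := by
      rw [tau_snd]; simp [Qw, List.range_succ]
    rw [h1]
    refine .mul _ _ _ ih ?_
    rw [← hof_iter]
    have hz := hx m
    generalize (tau (Cf π ε w))^[m] x = z at hz
    refine .mul _ _ _ ?_ (Pth.inl _ _)
    unfold hof sp
    split_ifs
    · rw [mul_one]; exact .bb _ hz
    · exact .inv _ _ (.bb _ hz)

end ActPath

section Main
variable {A G : Type} [Group G]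

theorem q_eq (L : Subgroup G) (g h : G) :
    ((g⁻¹ : G) : G ⧸ L) = ((h⁻¹ : G) : G ⧸ L) ↔ g * h⁻¹ ∈ L := by
  rw [QuotientGroup.eq, inv_inv]

open Classical in
theorem coherent_main {r : ℕ} [NeZero r] (π : Phi A →* G) (ε : ZMod r → Bool)
    (w : ZMod r → FreeGroup A) (n : ℕ) (hn : 0 < n) (hπ : Surjective π)
    (hker : π.ker = Subgroup.normalClosure {Qw ε w (n * r) 0})
    (hw : Injective (FreeGroup.lift w)) : CoherentGroup G := by
  intro L hL
  obtain ⟨d, par, T⟩ := tree_exists π ε w n hn hπ hker hw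
  obtain ⟨N, hNdef⟩ : ∃ N, N = n * r := ⟨_, rfl⟩
  rw [← hNdef] at T hker
  have hN0 : (N : ZMod r) = 0 := by rw [hNdef]; simp
  have hrN : r ≤ N := by rw [hNdef]; exact Nat.le_mul_of_pos_left r hn
  have hQ0 : π (Qw ε w N 0) = 1 := by
    have : Qw ε w N 0 ∈ π.ker := by
      rw [hker]; exact Subgroup.subset_normalClosure rfl
    exact this
  have hQ : ∀ i, π (Qw ε w N i) = 1 := Qw_one ε w π N hN0 hQ0
  have hτ := tau_period π ε w N hN0 hQ0
  let q : G → G ⧸ L := fun g => ((g⁻¹ : G) : G ⧸ L)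
  let D : ZMod r → G ⧸ L → G ⧸ L := fun i x => (Cel π ε w i)⁻¹ • x
  have hqq : ∀ g h, q g = q h ↔ g * h⁻¹ ∈ L := q_eq L
  have hqs : Surjective q := by
    intro x
    obtain ⟨g, rfl⟩ := QuotientGroup.mk_surjective x
    exact ⟨g⁻¹, by simp [q]⟩
  have hqm : ∀ g c, q (g * c) = c⁻¹ • q g := by
    intro g c
    simp only [q, mul_inv_rev]
    rfl
  have hqD : ∀ i e, q (Cf π ε w i e) = D i (q e) := fun i e => hqm _ _
  -- a finite set of edges carrying generators of `L`
  have hfin : ∀ S : Finset G, ∃ Y : Set (G ⧸ L), Y.Finite ∧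
      ∀ s ∈ S, ∃ u, π u = s ∧ Pth π (q ⁻¹' Y) 1 u := by
    intro S
    induction S using Finset.induction_on with
    | empty => exact ⟨∅, Set.finite_empty, by simp⟩
    | insert a S _ ih =>
      obtain ⟨Y, h1, h2⟩ := ih
      obtain ⟨u, hu⟩ := hπ a
      obtain ⟨Y', h1', h2'⟩ := Pth.exists_finite (π := π) q 1 u
      refine ⟨Y ∪ Y', h1.union h1', ?_⟩
      intro s hs
      rcases Finset.mem_insert.mp hs with rfl | hs
      · exact ⟨u, hu, h2'.mono (Set.preimage_mono Set.subset_union_right)⟩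
      · obtain ⟨v, hv, hv'⟩ := h2 s hs
        exact ⟨v, hv, hv'.mono (Set.preimage_mono Set.subset_union_left)⟩
  obtain ⟨S, hS⟩ := id hL
  obtain ⟨Y0, hY0, hgen0⟩ := hfin S
  obtain ⟨Y, ⟨hY, hYY⟩, hmin0⟩ : ∃ Y : Set (G ⧸ L), (Y.Finite ∧ Y0 ⊆ Y) ∧
      ∀ B : Set (G ⧸ L), (B.Finite ∧ Y0 ⊆ B) → (bad D Y).ncard ≤ (bad D B).ncard := by
    have hex : ∃ k, ∃ Y : Set (G ⧸ L), (Y.Finite ∧ Y0 ⊆ Y) ∧ (bad D Y).ncard = k :=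
      ⟨_, Y0, ⟨hY0, subset_rfl⟩, rfl⟩
    obtain ⟨Y, h1, h2⟩ := Nat.find_spec hex
    refine ⟨Y, h1, fun B hB => ?_⟩
    rw [h2]
    exact Nat.find_min' hex ⟨B, hB, rfl⟩
  have hmin : ∀ B : Set (G ⧸ L), B.Finite → Y ⊆ B → (bad D Y).ncard ≤ (bad D B).ncard :=
    fun B h1 h2 => hmin0 B ⟨h1, hYY.trans h2⟩
  obtain ⟨E, hEdef⟩ : ∃ E, E = q ⁻¹' Y := ⟨_, rfl⟩
  have hgen : ∀ s ∈ S, ∃ u, π u = s ∧ Pth π E 1 u := by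
    intro s hs
    obtain ⟨u, h1, h2⟩ := hgen0 s hs
    exact ⟨u, h1, hEdef ▸ h2.mono (Set.preimage_mono hYY)⟩
  have hE : ∀ l ∈ L, ∀ g, g ∈ E → l * g ∈ E := by
    intro l hl g hg
    rw [hEdef] at hg ⊢
    have : q (l * g) = q g := (hqq _ _).2 (by simpa using hl)
    show q (l * g) ∈ Y
    rw [this]; exact hg
  -- transversal
  have htX : ∃ tX : G ⧸ L → Phi A, tX (q 1) = 1 ∧
      ∀ g, Reach π L E g → Pth π E 1 (tX (q g)) ∧ π (tX (q g)) * g⁻¹ ∈ L := by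
    refine ⟨fun x => if x = q 1 then 1 else
      if h : ∃ u, Pth π E 1 u ∧ q (π u) = x then h.choose else 1, if_pos rfl, ?_⟩
    intro g hg
    by_cases h1 : q g = q 1
    · simp only [h1, if_true]
      refine ⟨.one 1, ?_⟩
      rw [← hqq, map_one, h1]
    · have h2 : ∃ u, Pth π E 1 u ∧ q (π u) = q g := by
        obtain ⟨u, h3, h4⟩ := hg
        exact ⟨u, h3, (hqq _ _).2 h4⟩
      simp only [h1, if_false, dif_pos h2]
      exact ⟨h2.choose_spec.1, (hqq _ _).1 h2.choose_spec.2⟩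
  obtain ⟨tX, tX1, htX⟩ := htX
  let t : G → Phi A := fun g => tX (q g)
  have t1 : t 1 = 1 := tX1
  have ht : ∀ g, Reach π L E g → Pth π E 1 (t g) ∧ π (t g) * g⁻¹ ∈ L := htX
  -- relators
  let Rel : Set (Lt π L E hE) := {z | ∃ x : G × ZMod r, (∀ m, ((tau (Cf π ε w))^[m] x).1 ∈ E) ∧
    Reach π L E (hof π ε x) ∧
    z.1 = t (hof π ε x) * Qw ε w N x.2 * (t (hof π ε x))⁻¹}
  have hRel : Rel.Finite := by
    let F : (G ⧸ L) × ZMod r → Phi A := fun y =>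
      tX ((if ε y.2 = true then 1 else π bb)⁻¹ • y.1) * Qw ε w N y.2 *
        (tX ((if ε y.2 = true then 1 else π bb)⁻¹ • y.1))⁻¹
    have h1 : (F '' (Y ×ˢ Set.univ)).Finite := (hY.prod Set.finite_univ).image F
    refine Set.Finite.of_finite_image (f := Subtype.val) (h1.subset ?_)
      (Subtype.val_injective.injOn)
    rintro _ ⟨z, ⟨x, hx, _, hz⟩, rfl⟩
    refine ⟨(q x.1, x.2), ⟨?_, trivial⟩, ?_⟩
    · have := hx 0
      rw [hEdef] at this
      exact this
    · rw [hz]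
      simp only [F, t, hof, hqm]
  let R : Subgroup (Lt π L E hE) := Subgroup.normalClosure Rel
  have hRn : R.Normal := Subgroup.normalClosure_normal
  let l : G → (Lt π L E hE) ⧸ R := fun g => kap R t g bb
  have hflat : FlatOn (tau (Cf π ε w)) Prod.fst (fun x => ε x.2)
        (fun x => kap R t (x.1 * (if ε x.2 = true then π bb else 1))
          (FreeGroup.map Sum.inl (w x.2))) N l (q ⁻¹' Y) := by
    rw [← hEdef]
    intro x hx
    have h1 := act_Q R ε w ht l (fun _ _ => rfl) x 1 N
    rw [act_path R ht l (fun _ _ => rfl) (pth_Q ε w x hx N)] at h1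
    have h2 := congrArg Prod.snd h1
    simp only [one_mul] at h2
    rw [← h2]
    unfold kap
    split_ifs with hr
    · have hm := kap_mem (hE := hE) ht hr (pth_Q ε w x hx N)
      rw [hQ, mul_one] at hm ⊢
      rw [cls, dif_pos hm]
      rw [QuotientGroup.eq_one_iff]
      exact Subgroup.subset_normalClosure ⟨x, hx, hr, rfl⟩
    · rfl
  obtain ⟨l', hl', hflat'⟩ := big_ext hqs hqD T hτ hrN _ _ Y hY hmin l hflat
  have hl'E : ∀ g ∈ E, l' g = kap R t g bb := by
    intro g hg
    rw [hEdef] at hg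
    exact hl' g hg
  let a' := act π l' (fun a g => kap R t g (FreeGroup.of (Sum.inl a)))
  have hact : π.ker ≤ a'.ker := by
    rw [hker]
    apply Subgroup.normalClosure_le_normal
    rintro _ rfl
    show a' _ = 1
    apply MulOpposite.unop_injective
    ext1 ⟨g, y⟩
    obtain ⟨x, hx, hx0⟩ : ∃ x : G × ZMod r, hof π ε x = g ∧ x.2 = 0 :=
      ⟨(g * (if ε 0 = true then 1 else π bb)⁻¹, 0), by simp only [hof, inv_mul_cancel_right], rfl⟩
    have h1 := act_Q R ε w ht l' hl'E x y N
    rw [hτ, hflat' x (fun _ => trivial), mul_one, hx0, hx] at h1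
    exact h1
  -- the map to `L`
  let f : Lt π L E hE →* L := (π.comp (Lt π L E hE).subtype).codRestrict L (fun u => u.2.2)
  have hf : ∀ u, (f u : G) = π u.1 := fun u => rfl
  have hfs : Surjective f := by
    have h1 : L ≤ (f.range).map L.subtype := by
      refine hS.ge.trans ((Subgroup.closure_le _).2 ?_)
      intro s hs
      obtain ⟨u, hu, hu'⟩ := hgen s hs
      have hsL : s ∈ L := by rw [← hS]; exact Subgroup.subset_closure hs
      exact ⟨f ⟨u, hu', by rw [hu]; exact hsL⟩, ⟨_, rfl⟩, hu⟩
    intro y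
    obtain ⟨_, ⟨z, rfl⟩, hz⟩ := h1 y.2
    exact ⟨z, Subtype.ext hz⟩
  have hfk : f.ker = Subgroup.normalClosure Rel := by
    apply le_antisymm
    · intro u hu
      have hu1 : π u.1 = 1 := by
        rw [← hf]
        have : f u = 1 := hu
        rw [this]; rfl
      have h1 : a' u.1 = 1 := hact hu1
      have h2 := act_path R ht l' hl'E u.2.1 1
      have h3 : (a' u.1).unop ((1 : G), (1 : (Lt π L E hE) ⧸ R)) = (1, 1) := by rw [h1]; rfl
      have h4 := h3.symm.trans h2
      have h5 := congrArg Prod.snd h4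
      simp only [one_mul] at h5
      have hr1 : Reach π L E 1 := ⟨1, .one 1, by simp⟩
      rw [kap, if_pos hr1, hu1, mul_one, t1, one_mul, inv_one, mul_one, cls, dif_pos u.2] at h5
      exact (QuotientGroup.eq_one_iff u).1 h5.symm
    · apply Subgroup.normalClosure_le_normal
      rintro z ⟨x, _, _, hz⟩
      show f z = 1
      apply Subtype.ext
      rw [hf, hz, map_mul, map_mul, hQ, mul_one, map_inv, mul_inv_cancel]
      rfl
  have hLfg : Group.FG L := (Group.fg_iff_subgroup_fg L).2 hL
  have : IsFreeGroup (Lt π L E hE) := subgroupIsFreeOfIsFree _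
  exact fp_lemma hLfg f hfs Rel hRel hfk

theorem zmod_equiv (r : ℕ) (hr : 1 ≤ r) :
    ∃ e : ZMod r ≃ Fin r, ∀ (j : ℕ) (hj : j < r), e (j : ZMod r) = ⟨j, hj⟩ := by
  have : NeZero r := ⟨by omega⟩
  refine ⟨⟨fun x => ⟨x.val, ZMod.val_lt x⟩, fun i => (i.val : ZMod r), ?_, ?_⟩, ?_⟩
  · intro x; simp
  · intro i; exact Fin.ext (ZMod.val_cast_of_lt i.isLt)
  · intro j hj; exact Fin.ext (ZMod.val_cast_of_lt hj)

theorem bWord_eq (p r : ℕ) (e : ZMod r ≃ Fin r)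
    (he : ∀ (j : ℕ) (hj : j < r), e (j : ZMod r) = ⟨j, hj⟩)
    (ε : Fin r → Bool) (Wi : Fin r → List (Fin p × Bool)) :
    FreeGroup.mk (bWord p r ε Wi) =
      ((List.range r).map
        (fun j : ℕ => Tw (fun i => ε (e i)) (fun i => FreeGroup.mk (Wi (e i))) (j : ZMod r))).prod := by
  have h1 : ∀ s : List (Fin r), FreeGroup.mk ((s.map fun i =>
      ((Sum.inr (), ε i) : (Fin p ⊕ Unit) × Bool) :: embedWord Sum.inl (Wi i)).flatten) =
      (s.map (fun i => sp bb (ε i) * FreeGroup.map Sum.inl (FreeGroup.mk (Wi i)))).prod := by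
    intro s
    induction s with
    | nil => rfl
    | cons i s ih =>
      rw [List.map_cons, List.flatten_cons, ← FreeGroup.mul_mk, ih, List.map_cons, List.prod_cons]
      congr 1
      rw [← List.singleton_append, ← FreeGroup.mul_mk, mk_sp]
      rfl
  have h2 : (List.range r).map (fun j : ℕ => e (j : ZMod r)) = List.finRange r := by
    apply List.ext_getElem
    · simp
    · intro i h3 h4
      have : i < r := by simpa using h3
      simp [he i this]
  unfold bWord
  rw [h1, ← h2, List.map_map]
  rfl

end Main

end OneRel
/-- **Theorem `thm:1rel-extreme` (coherence part).**  The one-relator group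
`G = ⟨a₁, …, a_p, b ∣ (b^{ε₁} W₁ ⋯ b^{ε_r} W_r)^n⟩`, where each `εᵢ = ±1` and the `Wᵢ`
are nonempty reduced words in the `aᵢ` freely generating a subgroup of the free group
on `a₁, …, a_p`, is coherent. -/
theorem one_relator_extreme_coherent
    (p r n : ℕ) (hp : 1 ≤ p) (hr : 1 ≤ r) (hn : 1 ≤ n)
    (ε : Fin r → Bool)
    (Wi : Fin r → List (Fin p × Bool))
    (hne : ∀ i, Wi i ≠ []) (hred : ∀ i, WordReduced (Wi i))
    (hfree : Function.Injective
      (FreeGroup.lift (fun i : Fin r => FreeGroup.mk (Wi i)) :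
        FreeGroup (Fin r) →* FreeGroup (Fin p))) :
    CoherentGroup (PresentedGroup
      ({FreeGroup.mk (bWord p r ε Wi) ^ n} : Set (FreeGroup (Fin p ⊕ Unit)))) := by
  obtain ⟨e, he⟩ := OneRel.zmod_equiv r hr
  have : NeZero r := ⟨by omega⟩
  refine OneRel.coherent_main (PresentedGroup.mk _) (fun i => ε (e i))
    (fun i => FreeGroup.mk (Wi (e i))) n hn (PresentedGroup.mk_surjective _) ?_ ?_
  · have h1 : OneRel.Qw (fun i => ε (e i)) (fun i => FreeGroup.mk (Wi (e i))) (n * r) 0 =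
        FreeGroup.mk (bWord p r ε Wi) ^ n := by
      rw [OneRel.bWord_eq p r e he, ← OneRel.prod_range_mul]
      simp only [OneRel.Qw, zero_add]
    rw [h1]
    exact QuotientGroup.ker_mk' _
  · have h2 : FreeGroup.lift (fun i => FreeGroup.mk (Wi (e i))) =
        (FreeGroup.lift (fun i => FreeGroup.mk (Wi i))).comp
          (FreeGroup.freeGroupCongr e).toMonoidHom := by
      ext i
      simp
    rw [h2]
    exact hfree.comp (FreeGroup.freeGroupCongr e).injective
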